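/- arXiv:math/9912143 — 3 statements merged into one kernel-verified Lean document; each statement's English description precedes it below -/
import Mathlib

section
/- In the biorthogonal setting with N = n + 1, the following reflection identity of Hisakado type holds as an identity of polynomials: p_{n+1}(z) − z·p_n(z) = p_{n+1}(0) · q_n*(z), where q_n*(z) := zⁿ·q_n(1/z) is the reciprocal (reversed-coefficient) polynomial of the monic degree-n polynomial q_n; symmetrically, q_{n+1}(z) − z·q_n(z) = q_{n+1}(0) · p_n*(z). -/
/-!
Multiplication by `z` in the first slot and by `1/z` in the second cancel on the unit circle, so the
pairing is a bilinear form `B` with the Toeplitz property `B (X p) (X q) = B p q`; this is the only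
property of the pairing that is used, and it is invariant under exchanging the two slots, so the
second identity is the first one for `B.flip`.

For the first identity put `r = p_{n+1} - X p_n - p_{n+1}(0) q_n*`. The leading terms cancel, and
`r(0) = 0` because `q_n*(0) = 1`; hence `r = X s` with `deg s < n`. For `j < n`, each of the three
terms of `r` pairs to zero with `X^{j+1}`: the first by orthogonality, the second by the Toeplitz
property and orthogonality, and the third because `B(q_n*, X^{j+1}) = B(X^{n-1-j}, q_n)`
(`toeplitz_reflect`). So `s` is orthogonal to everything of degree `< n`, and since the `h_m` do not
vanish, `s = 0` (`eq_zero_of_pairing_eq_zero`).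
-/

open MeasureTheory Polynomial

/-- The pairing `⟨p, q⟩ = (1/2π) ∫₀^{2π} p(e^{iθ}) q(e^{−iθ}) w(θ) dθ`. -/
noncomputable def circlePairing (w : ℝ → ℂ) (p q : Polynomial ℂ) : ℂ :=
  (1 / (2 * (Real.pi : ℂ))) *
    ∫ θ in (0 : ℝ)..(2 * Real.pi),
      Polynomial.eval (Complex.exp (θ * Complex.I)) p *
        Polynomial.eval (Complex.exp (-(θ * Complex.I))) q * w θ

lemma degree_sub_C_mul_lt {f u : ℂ[X]} {k : ℕ} (hf : f.degree < (k + 1 : ℕ))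
    (hu : u.Monic) (hud : u.natDegree = k) : (f - C (f.coeff k) * u).degree < (k : ℕ) := by
  rw [degree_lt_iff_coeff_zero] at hf ⊢
  intro m hm
  rcases hm.eq_or_lt with rfl | hm
  · have h1 : u.coeff k = 1 := by rw [← hud]; exact hu
    simp [h1]
  · have h1 : u.coeff m = 0 := coeff_eq_zero_of_natDegree_lt (by omega)
    simp [h1, hf m hm]

lemma pairing_eq_zero_of_degree_lt (B : ℂ[X] →ₗ[ℂ] ℂ[X] →ₗ[ℂ] ℂ) {N : ℕ} {p q : ℕ → ℂ[X]}
    (hqm : ∀ m ≤ N, (q m).Monic) (hqd : ∀ m ≤ N, (q m).natDegree = m)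
    (horth : ∀ i ≤ N, ∀ j ≤ N, i ≠ j → B (p i) (q j) = 0)
    {m : ℕ} (hm : m ≤ N) {g : ℂ[X]} (hg : g.degree < (m : ℕ)) : B (p m) g = 0 := by
  suffices H : ∀ k ≤ m, ∀ g : ℂ[X], g.degree < (k : ℕ) → B (p m) g = 0 from H m le_rfl g hg
  intro k
  induction k with
  | zero =>
    intro _ g hg
    have : g = 0 := by simpa using hg
    simp [this]
  | succ k ih =>
    intro hk g hg
    have h1 := ih (by omega) _ (degree_sub_C_mul_lt hg (hqm k (by omega)) (hqd k (by omega)))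
    rw [← smul_eq_C_mul, map_sub, map_smul, horth m hm k (by omega) (by omega)] at h1
    simpa using h1

/-- The form is nondegenerate on polynomials of degree less than `k`: testing against `q_{k-1}`, then
`q_{k-2}`, and so on, kills the coefficients from the top down. -/
lemma eq_zero_of_pairing_eq_zero (B : ℂ[X] →ₗ[ℂ] ℂ[X] →ₗ[ℂ] ℂ) {N : ℕ} {p q : ℕ → ℂ[X]}
    (hpm : ∀ m ≤ N, (p m).Monic) (hpd : ∀ m ≤ N, (p m).natDegree = m)
    (hqd : ∀ m ≤ N, (q m).natDegree = m)
    (horth : ∀ i ≤ N, ∀ j ≤ N, i ≠ j → B (p i) (q j) = 0)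
    (hne : ∀ m ≤ N, B (p m) (q m) ≠ 0) {k : ℕ} (hk : k ≤ N) {s : ℂ[X]} (hs : s.degree < (k : ℕ))
    (hB : ∀ g : ℂ[X], g.degree < (k : ℕ) → B s g = 0) : s = 0 := by
  induction k with
  | zero => simpa using hs
  | succ k ih =>
    have hlt := degree_sub_C_mul_lt hs (hpm k (by omega)) (hpd k (by omega))
    have h1 : B.flip (q k) (s - C (s.coeff k) * p k) = 0 :=
      pairing_eq_zero_of_degree_lt B.flip hpm hpd
        (fun i hi j hj hij => horth j hj i hi hij.symm) (by omega) hlt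
    have hqk : (q k).degree < (k + 1 : ℕ) :=
      degree_le_natDegree.trans_lt (by rw [hqd k (by omega)]; exact_mod_cast k.lt_succ_self)
    rw [← smul_eq_C_mul, map_sub, map_smul, LinearMap.flip_apply, LinearMap.flip_apply,
      hB _ hqk] at h1
    have h2 : s.coeff k = 0 := by
      simpa [hne k (by omega)] using h1
    refine ih (by omega) ?_ fun g hg => hB g (hg.trans (by exact_mod_cast k.lt_succ_self))
    simpa [h2] using hlt

lemma toeplitz_X_pow (B : ℂ[X] →ₗ[ℂ] ℂ[X] →ₗ[ℂ] ℂ)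
    (hT : ∀ f g, B (X * f) (X * g) = B f g) (k : ℕ) (f g : ℂ[X]) :
    B (X ^ k * f) (X ^ k * g) = B f g := by
  induction k with
  | zero => simp
  | succ k ih => rw [pow_succ', mul_assoc, mul_assoc, hT, ih]

lemma toeplitz_X_pow_eq (B : ℂ[X] →ₗ[ℂ] ℂ[X] →ₗ[ℂ] ℂ)
    (hT : ∀ f g, B (X * f) (X * g) = B f g) {a b c d : ℕ} (h : a + d = b + c) :
    B (X ^ a) (X ^ b) = B (X ^ c) (X ^ d) := by
  wlog hac : a ≤ c generalizing a b c d
  · exact (this (by omega) (by omega)).symm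
  obtain ⟨k, rfl⟩ := Nat.exists_eq_add_of_le' hac
  obtain rfl : d = k + b := by omega
  rw [pow_add, pow_add, toeplitz_X_pow B hT]

lemma toeplitz_reflect (B : ℂ[X] →ₗ[ℂ] ℂ[X] →ₗ[ℂ] ℂ)
    (hT : ∀ f g, B (X * f) (X * g) = B f g) {n j : ℕ} (hj : j ≤ n) {f : ℂ[X]}
    (hf : f.natDegree ≤ n) : B (reflect n f) (X ^ j) = B (X ^ (n - j)) f := by
  refine induction_with_natDegree_le
    (fun f => B (reflect n f) (X ^ j) = B (X ^ (n - j)) f) n ?_ ?_ ?_ f hf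
  · simp
  · intro i r _ hi
    rw [reflect_C_mul_X_pow, revAt_le hi, ← smul_eq_C_mul, ← smul_eq_C_mul, map_smul, map_smul,
      LinearMap.smul_apply, toeplitz_X_pow_eq B hT (by omega : n - i + i = j + (n - j))]
  · intro f g _ _ h1 h2
    rw [reflect_add, map_add, LinearMap.add_apply, map_add, h1, h2]

lemma toeplitz_reflection_identity (B : ℂ[X] →ₗ[ℂ] ℂ[X] →ₗ[ℂ] ℂ)
    (hT : ∀ f g, B (X * f) (X * g) = B f g) {n : ℕ} {p q : ℕ → ℂ[X]}
    (hpm : ∀ m ≤ n + 1, (p m).Monic) (hpd : ∀ m ≤ n + 1, (p m).natDegree = m)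
    (hqm : ∀ m ≤ n + 1, (q m).Monic) (hqd : ∀ m ≤ n + 1, (q m).natDegree = m)
    (horth : ∀ i ≤ n + 1, ∀ j ≤ n + 1, i ≠ j → B (p i) (q j) = 0)
    (hne : ∀ m ≤ n + 1, B (p m) (q m) ≠ 0) :
    p (n + 1) - X * p n = C ((p (n + 1)).eval 0) * (q n).reverse := by
  have hqn := hqd n (by omega)
  have hrev : (q n).reverse = reflect n (q n) := by rw [reverse, hqn]
  rw [← sub_eq_zero, ← coeff_zero_eq_eval_zero]
  set r := p (n + 1) - X * p n - C ((p (n + 1)).coeff 0) * (q n).reverse with hr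
  have hdvd : X ∣ r := by
    rw [X_dvd_iff, hr]
    simp [(hqm n (by omega)).leadingCoeff]
  obtain ⟨s, hs⟩ := hdvd
  have hsdeg : s.degree < (n : ℕ) := by
    rw [degree_lt_iff_coeff_zero]
    intro m hm
    rw [← coeff_X_mul, ← hs, hr]
    have h0 : (q n).reverse.coeff (m + 1) = 0 :=
      coeff_eq_zero_of_natDegree_lt (by have := reverse_natDegree_le (q n); omega)
    rw [coeff_sub, coeff_sub, coeff_X_mul, coeff_C_mul, h0]
    rcases hm.eq_or_lt with rfl | hm
    · have h1 : (p (n + 1)).coeff (n + 1) = 1 := by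
        have := hpm (n + 1) le_rfl
        rwa [Monic, leadingCoeff, hpd (n + 1) le_rfl] at this
      have h2 : (p n).coeff n = 1 := by
        have := hpm n (by omega)
        rwa [Monic, leadingCoeff, hpd n (by omega)] at this
      simp [h1, h2]
    · have h1 : (p (n + 1)).coeff (m + 1) = 0 :=
        coeff_eq_zero_of_natDegree_lt (by rw [hpd _ le_rfl]; omega)
      have h2 : (p n).coeff m = 0 :=
        coeff_eq_zero_of_natDegree_lt (by rw [hpd _ (by omega)]; omega)
      simp [h1, h2]
  have hmono : ∀ j < n, B s (X ^ j) = 0 := by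
    intro j hj
    have h1 : B (p (n + 1)) (X ^ (j + 1)) = 0 :=
      pairing_eq_zero_of_degree_lt B hqm hqd horth le_rfl
        (by rw [degree_X_pow]; exact_mod_cast (by omega))
    have h2 : B (p n) (X ^ j) = 0 :=
      pairing_eq_zero_of_degree_lt B hqm hqd horth (by omega)
        (by rw [degree_X_pow]; exact_mod_cast hj)
    have h3 : B.flip (q n) (X ^ (n - (j + 1))) = 0 :=
      pairing_eq_zero_of_degree_lt B.flip hpm hpd
        (fun i hi j hj hij => horth j hj i hi hij.symm) (by omega)
        (by rw [degree_X_pow]; exact_mod_cast (by omega))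
    rw [LinearMap.flip_apply] at h3
    rw [← hT, ← hs, ← pow_succ', hr, map_sub, map_sub, LinearMap.sub_apply, LinearMap.sub_apply,
      ← smul_eq_C_mul, map_smul, LinearMap.smul_apply, hrev,
      toeplitz_reflect B hT (by omega) hqn.le, h1, h3, pow_succ', hT, h2]
    simp
  have hs0 : s = 0 := by
    refine eq_zero_of_pairing_eq_zero B hpm hpd hqd horth hne (by omega : n ≤ n + 1) hsdeg ?_
    intro g hg
    rw [degree_lt_iff_coeff_zero] at hg
    rw [g.as_sum_range_C_mul_X_pow, map_sum]
    refine Finset.sum_eq_zero fun j _ => ?_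
    rw [← smul_eq_C_mul, map_smul]
    rcases lt_or_ge j n with h | h
    · simp [hmono j h]
    · simp [hg j h]
  rw [hs, hs0, mul_zero]

/-- `circlePairing` as a bilinear map; continuity of the weight makes the integrals additive. -/
noncomputable def circleForm (w : ℝ → ℂ) (hw : Continuous w) :
    ℂ[X] →ₗ[ℂ] ℂ[X] →ₗ[ℂ] ℂ :=
  have hint : ∀ f g : ℂ[X], IntervalIntegrable (fun θ : ℝ =>
      eval (Complex.exp (θ * Complex.I)) f * eval (Complex.exp (-(θ * Complex.I))) g * w θ)
      volume 0 (2 * Real.pi) := fun f g => Continuous.intervalIntegrable (by fun_prop) _ _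
  LinearMap.mk₂ ℂ (circlePairing w)
    (fun f f' g => by
      simp only [circlePairing]
      rw [← mul_add, ← intervalIntegral.integral_add (hint f g) (hint f' g)]
      simp only [eval_add, add_mul])
    (fun c f g => by
      simp only [circlePairing, eval_smul, smul_eq_mul, mul_assoc]
      rw [intervalIntegral.integral_const_mul]
      ring)
    (fun f g g' => by
      simp only [circlePairing]
      rw [← mul_add, ← intervalIntegral.integral_add (hint f g) (hint f g')]
      simp only [eval_add, add_mul, mul_add])
    (fun c f g => by
      simp only [circlePairing, eval_smul, smul_eq_mul, mul_assoc, mul_left_comm _ c]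
      rw [intervalIntegral.integral_const_mul]
      ring)

lemma circlePairing_X_mul (w : ℝ → ℂ) (f g : ℂ[X]) :
    circlePairing w (X * f) (X * g) = circlePairing w f g := by
  simp only [circlePairing, eval_mul, eval_X]
  congr 2
  ext θ
  have h : Complex.exp (θ * Complex.I) * Complex.exp (-(θ * Complex.I)) = 1 := by
    rw [← Complex.exp_add]; simp
  linear_combination (eval (Complex.exp (θ * Complex.I)) f *
    eval (Complex.exp (-(θ * Complex.I))) g * w θ) * h

theorem hisakado_reflection_identity (w : ℝ → ℂ) (hw : Continuous w)
    (hper : ∀ θ : ℝ, w (θ + 2 * Real.pi) = w θ)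
    (n : ℕ) (p q : ℕ → Polynomial ℂ)
    (hpmonic : ∀ m ≤ n + 1, (p m).Monic) (hpdeg : ∀ m ≤ n + 1, (p m).natDegree = m)
    (hqmonic : ∀ m ≤ n + 1, (q m).Monic) (hqdeg : ∀ m ≤ n + 1, (q m).natDegree = m)
    (horth : ∀ i ≤ n + 1, ∀ j ≤ n + 1, i ≠ j → circlePairing w (p i) (q j) = 0)
    (hne : ∀ m ≤ n + 1, circlePairing w (p m) (q m) ≠ 0) :
    p (n + 1) - Polynomial.X * p n =
        Polynomial.C ((p (n + 1)).eval 0) * (q n).reverse ∧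
      q (n + 1) - Polynomial.X * q n =
        Polynomial.C ((q (n + 1)).eval 0) * (p n).reverse := by
  have hT : ∀ f g, circleForm w hw (X * f) (X * g) = circleForm w hw f g :=
    circlePairing_X_mul w
  exact ⟨toeplitz_reflection_identity (circleForm w hw) hT hpmonic hpdeg hqmonic hqdeg horth hne,
    toeplitz_reflection_identity (circleForm w hw).flip (fun f g => hT g f)
      hqmonic hqdeg hpmonic hpdeg (fun i hi j hj hij => horth j hj i hi hij.symm) hne⟩
end

section
/- For every integer ℓ ≥ 1 and every x ∈ ℝ, the series Σ_{n=0}^{∞} (x^{2n}/(n!)²) · #{ permutations π of {1,…,n} with σ(π) ≤ ℓ } converges and equals the Haar integral E_{U(ℓ)}[ exp( x · (tr M + conj(tr M)) ) ]. -/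
/-!
Expanding `exp (x t) * exp (x t̄)` with `t = tr M` and integrating termwise, the moments
`E[t ^ a * t̄ ^ b]` with `a ≠ b` vanish by invariance under scalar unitaries
(`Gessel.integral_offdiag`), so the identity reduces to Rains's formula
`E[|tr M| ^ (2 n)] = #{π ∈ S_n | lisLen n π ≤ ℓ}` (`Gessel.integral_diag`).

On the `n`-fold tensor power of `ℂ^ℓ`, the Haar average of conjugation by `M^{⊗n}` is a projection
onto the commutant of the tensor powers, with trace `E[|tr M| ^ (2 n)]`; hence this moment is the
dimension of the commutant (`Gessel.isProj_avg`, `Gessel.trace_avg`).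

By Schur–Weyl duality (`Gessel.commutant_eq_span`) the commutant is spanned by the place
permutations `P σ`. Its ingredients are the Zariski density of `U(ℓ)` in the space of matrices
(`Gessel.eq_zero_of_unitary`), polarization (`Gessel.commute_inv`), and the double commutant
theorem for `S_n`, obtained by averaging a projection (`Gessel.mem_span_of_commute_inv`).

The `P π` with `lisLen n π ≤ ℓ` form a basis of that span, by two triangularity arguments for the
lexicographic order. They span: an increasing subsequence of length `ℓ + 1` in `π` gives, through
the vanishing antisymmetrizer on `ℓ + 1` slots, an expression of `P π` by lexicographically larger
permutations (`Gessel.P_mem_span_good`). They are independent: if `lisLen n π ≤ ℓ`, the indices can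
be coloured with `ℓ` colours so that `π` decreases on each class, and the matrix entry given by this
colouring is nonzero at `P π` and vanishes at every `P σ` with `σ` lexicographically larger
(`Gessel.exists_entry`).
-/

open MeasureTheory Matrix

noncomputable section

instance (n : ℕ) : MeasurableSpace (Matrix.unitaryGroup (Fin n) ℂ) := borel _

/-- `lisLen n π` is the length of the longest increasing subsequence of the permutation `π`
of `{1,…,n}`: the largest `k` for which there exist indices `i₁ < ⋯ < i_k` with
`π(i₁) < ⋯ < π(i_k)`. -/
noncomputable def lisLen (n : ℕ) (π : Equiv.Perm (Fin n)) : ℕ :=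
  sSup {k : ℕ | ∃ s : Fin k → Fin n, StrictMono s ∧ StrictMono (π ∘ s)}

/-! ### Longest increasing subsequences and colourings -/

namespace Gessel

lemma lisLen_le_iff {n : ℕ} (π : Equiv.Perm (Fin n)) (ℓ : ℕ) :
    lisLen n π ≤ ℓ ↔
      ∀ k : ℕ, (∃ s : Fin k → Fin n, StrictMono s ∧ StrictMono (π ∘ s)) → k ≤ ℓ := by
  have hb : BddAbove {k : ℕ | ∃ s : Fin k → Fin n, StrictMono s ∧ StrictMono (π ∘ s)} := by
    refine ⟨n, ?_⟩
    rintro k ⟨s, hs, -⟩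
    simpa using Fintype.card_le_of_injective s hs.injective
  constructor
  · intro h k hk
    exact (le_csSup hb hk).trans h
  · intro h
    refine csSup_le ⟨0, Fin.elim0, fun i => i.elim0, fun i => i.elim0⟩ fun k hk => h k hk

lemma exists_increasing_of_lt_lisLen {n ℓ : ℕ} {π : Equiv.Perm (Fin n)} (h : ¬ lisLen n π ≤ ℓ) :
    ∃ s : Fin (ℓ + 1) → Fin n, StrictMono s ∧ StrictMono (π ∘ s) := by
  rw [lisLen_le_iff] at h
  push Not at h
  obtain ⟨k, ⟨s, hs, hs'⟩, hk⟩ := h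
  have hc : StrictMono (Fin.castLE (show ℓ + 1 ≤ k by omega)) := Fin.strictMono_castLE _
  exact ⟨s ∘ Fin.castLE (by omega), hs.comp hc, hs'.comp hc⟩

/-- Mirsky's argument: colouring each index by the length of the longest increasing subsequence
that ends there uses at most `ℓ` colours, and `π` is decreasing on each colour class. -/
lemma exists_coloring {n ℓ : ℕ} {π : Equiv.Perm (Fin n)} (h : lisLen n π ≤ ℓ) :
    ∃ w : Fin n → Fin ℓ, ∀ i j, i < j → w i = w j → π j < π i := by
  classical
  rw [lisLen_le_iff] at h
  have hcard : ∀ t : Finset (Fin n), StrictMonoOn π t → t.card ≤ ℓ := by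
    intro t ht
    refine h _ ⟨t.orderEmbOfFin rfl, (t.orderEmbOfFin rfl).strictMono, fun a b hab => ?_⟩
    exact ht (Finset.orderEmbOfFin_mem _ _ _) (Finset.orderEmbOfFin_mem _ _ _)
      ((t.orderEmbOfFin rfl).strictMono hab)
  let F : Fin n → Finset (Finset (Fin n)) := fun i =>
    Finset.univ.filter fun t => i ∈ t ∧ (∀ j ∈ t, j ≤ i) ∧ StrictMonoOn π t
  have hFne : ∀ i, {i} ∈ F i := by
    intro i
    simp [F]
  let d : Fin n → ℕ := fun i => (F i).sup Finset.card
  have hd1 : ∀ i, 1 ≤ d i := fun i =>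
    (Finset.card_singleton i).symm.le.trans (Finset.le_sup (f := Finset.card) (hFne i))
  have hd2 : ∀ i, d i ≤ ℓ := fun i => by
    refine Finset.sup_le fun t ht => hcard t ?_
    exact (Finset.mem_filter.1 ht).2.2.2
  have hlt : ∀ i j, i < j → π i < π j → d i < d j := by
    intro i j hij hπ
    obtain ⟨t, ht, hdt⟩ := Finset.exists_mem_eq_sup (F i) ⟨_, hFne i⟩ Finset.card
    obtain ⟨-, hit, hle, hmono⟩ := Finset.mem_filter.1 ht
    have hjt : j ∉ t := fun hj => absurd (hle j hj) (not_le.2 hij)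
    have hmem : insert j t ∈ F j := by
      refine Finset.mem_filter.2 ⟨Finset.mem_univ _, Finset.mem_insert_self _ _, ?_, ?_⟩
      · intro k hk
        rcases Finset.mem_insert.1 hk with rfl | hk
        · exact le_rfl
        · exact (hle k hk).trans hij.le
      · intro a ha b hb hab
        rcases Finset.mem_insert.1 ha with rfl | ha'
        · rcases Finset.mem_insert.1 hb with rfl | hb'
          · exact absurd hab (lt_irrefl _)
          · exact absurd (hab.trans_le (hle b hb')) (not_lt.2 hij.le)
        · rcases Finset.mem_insert.1 hb with rfl | hb'
          · exact (hmono.monotoneOn ha' hit (hle a ha')).trans_lt hπ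
          · exact hmono ha' hb' hab
    have := Finset.le_sup (f := Finset.card) hmem
    rw [Finset.card_insert_of_notMem hjt] at this
    change (F i).sup Finset.card < (F j).sup Finset.card
    omega
  refine ⟨fun i => ⟨d i - 1, by have := hd1 i; have := hd2 i; omega⟩, fun i j hij hw => ?_⟩
  by_contra hcon
  have hne : π i ≠ π j := fun e => hij.ne (π.injective e)
  have := hlt i j hij (lt_of_le_of_ne (not_lt.1 hcon) hne)
  simp only [Fin.mk.injEq] at hw
  have := hd1 i
  have := hd1 j
  omega

lemma exists_first_moved {n : ℕ} {τ : Equiv.Perm (Fin n)} (h : τ ≠ 1) :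
    ∃ k, (∀ j < k, τ j = j) ∧ k < τ k := by
  have hex : ∃ k, τ k ≠ k := by
    by_contra hcon
    push Not at hcon
    exact h (Equiv.ext hcon)
  obtain ⟨k, hk, hmin⟩ := WellFounded.has_min (wellFounded_lt (α := Fin n)) {k | τ k ≠ k} hex
  have hfix : ∀ j < k, τ j = j := fun j hj => by
    by_contra hc
    exact hmin j hc hj
  refine ⟨k, hfix, lt_of_le_of_ne ?_ (Ne.symm hk)⟩
  by_contra hlt
  push Not at hlt
  exact hk (τ.injective (hfix _ hlt))

/-! ### The span of the place permutations -/

/-- The place-permutation operator on the `n`-fold tensor power of `ℂ^ℓ`, in the standard basis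
indexed by words `Fin n → Fin ℓ`. With this convention `P (σ * τ) = P σ * P τ`. -/
def P {n ℓ : ℕ} (σ : Equiv.Perm (Fin n)) :
    Matrix (Fin n → Fin ℓ) (Fin n → Fin ℓ) ℂ :=
  Matrix.of fun i j => if i ∘ σ = j then 1 else 0

lemma P_apply {n ℓ : ℕ} (σ : Equiv.Perm (Fin n)) (i j : Fin n → Fin ℓ) :
    P σ i j = if i ∘ σ = j then 1 else 0 := rfl

/-- One-line notation of a permutation, compared lexicographically. -/
def key {n : ℕ} (σ : Equiv.Perm (Fin n)) : Lex (Fin n → Fin n) := toLex σ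

lemma key_lt_iff {n : ℕ} {σ τ : Equiv.Perm (Fin n)} :
    key σ < key τ ↔ ∃ k, (∀ j < k, σ j = τ j) ∧ σ k < τ k := Iff.rfl

/-- Unitriangularity of the `P σ`. The entry is `(w ∘ π⁻¹, w)` with `w` the colouring attached to
`π`: if `P σ` does not vanish there, `π⁻¹ * σ` preserves colours, and at its first moved index it
goes up within a colour class, on which `π` decreases. -/
lemma exists_entry {n ℓ : ℕ} {π : Equiv.Perm (Fin n)} (h : lisLen n π ≤ ℓ) :
    ∃ i j : Fin n → Fin ℓ, P π i j = 1 ∧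
      ∀ σ : Equiv.Perm (Fin n), σ ≠ π → P σ i j ≠ 0 → key σ < key π := by
  obtain ⟨w, hw⟩ := exists_coloring h
  refine ⟨w ∘ π.symm, w, ?_, fun σ hσ hne => ?_⟩
  · rw [P_apply, if_pos]
    ext k
    simp
  · rw [P_apply] at hne
    have hws : (w ∘ π.symm) ∘ σ = w := by
      by_contra hc
      exact hne (if_neg hc)
    have hτ : π⁻¹ * σ ≠ 1 := fun e => hσ (inv_mul_eq_one.1 e).symm
    obtain ⟨k, hfix, hk⟩ := exists_first_moved hτ
    rw [key_lt_iff]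
    refine ⟨k, fun j hj => ?_, ?_⟩
    · have := hfix j hj
      rwa [Equiv.Perm.mul_apply, Equiv.Perm.inv_eq_iff_eq] at this
    · have hc : w k = w ((π⁻¹ * σ) k) := (congrFun hws k).symm
      simpa using hw _ _ hk hc

lemma linearIndependent_P (n ℓ : ℕ) :
    LinearIndependent ℂ
      (fun π : {π : Equiv.Perm (Fin n) // lisLen n π ≤ ℓ} =>
        (P π.1 : Matrix (Fin n → Fin ℓ) (Fin n → Fin ℓ) ℂ)) := by
  classical
  rw [Fintype.linearIndependent_iff]
  intro c hc
  by_contra hcon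
  push Not at hcon
  obtain ⟨π₀, hπ₀⟩ := hcon
  obtain ⟨π, hπ, hmin⟩ := Finset.exists_min_image
    (Finset.univ.filter fun π : {π : Equiv.Perm (Fin n) // lisLen n π ≤ ℓ} => c π ≠ 0)
    (fun π => key π.1) ⟨π₀, by simpa using hπ₀⟩
  obtain ⟨i, j, h1, hlt⟩ := exists_entry π.2
  have hij := congrFun (congrFun hc i) j
  rw [Matrix.sum_apply, Finset.sum_eq_single π] at hij
  · rw [Matrix.smul_apply, h1] at hij
    simp only [smul_eq_mul, mul_one, Matrix.zero_apply] at hij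
    exact (Finset.mem_filter.1 hπ).2 hij
  · intro σ _ hσ
    rw [Matrix.smul_apply, smul_eq_mul, mul_eq_zero]
    by_contra hne
    push Not at hne
    have := hlt σ.1 (fun e => hσ (Subtype.ext e)) hne.2
    exact absurd (hmin σ (by simpa using hne.1)) (not_le.2 this)
  · simp

/-- The antisymmetrizer on `ℓ + 1` tensor slots vanishes on tensors over `ℂ^ℓ`. -/
lemma antisymm_sum_eq_zero {n ℓ : ℕ} (π : Equiv.Perm (Fin n)) (s : Fin (ℓ + 1) ↪ Fin n) :
    ∑ τ : Equiv.Perm (Fin (ℓ + 1)), ((Equiv.Perm.sign τ : ℤ) : ℂ) •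
      (P (π * τ.viaFintypeEmbedding s) : Matrix (Fin n → Fin ℓ) (Fin n → Fin ℓ) ℂ) = 0 := by
  ext i j
  rw [Matrix.sum_apply, Matrix.zero_apply]
  obtain ⟨a, b, hab, heq⟩ := Fintype.exists_ne_map_eq_of_card_lt
    (fun a : Fin (ℓ + 1) => i (π (s a))) (by simp)
  have hfix : ∀ τ : Equiv.Perm (Fin (ℓ + 1)),
      (P (π * (Equiv.swap a b * τ).viaFintypeEmbedding s) :
        Matrix (Fin n → Fin ℓ) (Fin n → Fin ℓ) ℂ) i j = P (π * τ.viaFintypeEmbedding s) i j := by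
    intro τ
    rw [P_apply, P_apply]
    have : i ∘ (π * (Equiv.swap a b * τ).viaFintypeEmbedding s : Equiv.Perm (Fin n)) =
        i ∘ (π * τ.viaFintypeEmbedding s : Equiv.Perm (Fin n)) := by
      ext1 k
      simp only [Function.comp_apply, Equiv.Perm.mul_apply]
      by_cases hk : k ∈ Set.range s
      · obtain ⟨c, rfl⟩ := hk
        simp only [Equiv.Perm.viaFintypeEmbedding_apply_image, Equiv.Perm.mul_apply]
        rcases em (τ c = a) with h | h
        · rw [h, Equiv.swap_apply_left]
          exact heq.symm
        · by_cases h' : τ c = b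
          · rw [h', Equiv.swap_apply_right]
            exact heq
          · rw [Equiv.swap_apply_of_ne_of_ne h h']
      · rw [Equiv.Perm.viaFintypeEmbedding_apply_notMem_range _ _ hk,
          Equiv.Perm.viaFintypeEmbedding_apply_notMem_range _ _ hk]
    rw [this]
  refine Finset.sum_involution (fun τ _ => Equiv.swap a b * τ) ?_ ?_ ?_ ?_
  · intro τ _
    simp [Matrix.smul_apply, hfix, Equiv.Perm.sign_mul, Equiv.Perm.sign_swap hab]
  · intro τ _ _ he
    rw [mul_eq_right] at he
    exact hab (Equiv.swap_eq_one_iff.1 he)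
  · simp
  · intro τ _
    simp [← mul_assoc]

/-- Straightening: if `π` increases along `s`, then `π * τ` is lexicographically larger than `π`
for every nontrivial permutation `τ` of the range of `s`, so the antisymmetrizer relation rewrites
`P π` and the induction descends. -/
lemma P_mem_span_good {n ℓ : ℕ} (π : Equiv.Perm (Fin n)) :
    (P π : Matrix (Fin n → Fin ℓ) (Fin n → Fin ℓ) ℂ) ∈
      Submodule.span ℂ (Set.range
        (fun π : {π : Equiv.Perm (Fin n) // lisLen n π ≤ ℓ} => P π.1)) := by
  classical
  have hwf : WellFounded fun σ τ : Equiv.Perm (Fin n) => key τ < key σ :=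
    InvImage.wf key (wellFounded_gt (α := Lex (Fin n → Fin n)))
  induction π using hwf.induction with
  | _ π ih =>
  by_cases hπ : lisLen n π ≤ ℓ
  · exact Submodule.subset_span ⟨⟨π, hπ⟩, rfl⟩
  obtain ⟨s, hs, hs'⟩ := exists_increasing_of_lt_lisLen hπ
  let e : Fin (ℓ + 1) ↪ Fin n := ⟨s, hs.injective⟩
  have hsum := antisymm_sum_eq_zero (ℓ := ℓ) π e
  rw [← Finset.add_sum_erase _ _ (Finset.mem_univ 1)] at hsum
  have h1 : (1 : Equiv.Perm (Fin (ℓ + 1))).viaFintypeEmbedding e = 1 := by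
    ext k
    by_cases hk : k ∈ Set.range e
    · obtain ⟨c, rfl⟩ := hk
      simp
    · rw [Equiv.Perm.viaFintypeEmbedding_apply_notMem_range _ _ hk]
      rfl
  rw [h1] at hsum
  simp only [Equiv.Perm.sign_one, Units.val_one, Int.cast_one, one_smul, mul_one] at hsum
  rw [eq_neg_of_add_eq_zero_left hsum]
  refine Submodule.neg_mem _ (Submodule.sum_mem _ fun τ hτ => Submodule.smul_mem _ _ (ih _ ?_))
  have hτ1 : τ ≠ 1 := (Finset.mem_erase.1 hτ).1
  set τ' := τ.viaFintypeEmbedding e with hτ'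
  have hne : τ' ≠ 1 := by
    intro h
    refine hτ1 (Equiv.ext fun c => e.injective ?_)
    rw [← Equiv.Perm.viaFintypeEmbedding_apply_image τ e c, ← hτ', h]
    rfl
  obtain ⟨k, hfix, hk⟩ := exists_first_moved hne
  rw [key_lt_iff]
  refine ⟨k, fun j hj => ?_, ?_⟩
  · rw [Equiv.Perm.mul_apply, hfix j hj]
  · rw [Equiv.Perm.mul_apply]
    by_cases hkr : k ∈ Set.range e
    · obtain ⟨c, rfl⟩ := hkr
      rw [hτ', Equiv.Perm.viaFintypeEmbedding_apply_image] at hk ⊢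
      exact hs' (hs.lt_iff_lt.1 hk)
    · rw [hτ', Equiv.Perm.viaFintypeEmbedding_apply_notMem_range _ _ hkr] at hk
      exact absurd hk (lt_irrefl _)

lemma finrank_span_P (n ℓ : ℕ) :
    Module.finrank ℂ (Submodule.span ℂ (Set.range
      (P : Equiv.Perm (Fin n) → Matrix (Fin n → Fin ℓ) (Fin n → Fin ℓ) ℂ))) =
      Nat.card {π : Equiv.Perm (Fin n) // lisLen n π ≤ ℓ} := by
  classical
  have hspan : Submodule.span ℂ (Set.range
      (P : Equiv.Perm (Fin n) → Matrix (Fin n → Fin ℓ) (Fin n → Fin ℓ) ℂ)) =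
      Submodule.span ℂ (Set.range
        (fun π : {π : Equiv.Perm (Fin n) // lisLen n π ≤ ℓ} => P π.1)) := by
    apply le_antisymm
    · rw [Submodule.span_le]
      rintro _ ⟨π, rfl⟩
      exact P_mem_span_good π
    · refine Submodule.span_mono ?_
      rintro _ ⟨π, rfl⟩
      exact ⟨π.1, rfl⟩
  rw [hspan, finrank_span_eq_card (linearIndependent_P n ℓ), Nat.card_eq_fintype_card]

/-! ### Zariski density of the unitary group -/

/-- A polynomial in the matrix entries that vanishes on unitary matrices vanishes on Hermitian
matrices: on `U diag(z) U*` it is a polynomial in `z` which is zero on the torus `|z_a| = 1`. -/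
lemma eval_hermitian {ℓ : ℕ} (F : MvPolynomial (Fin ℓ × Fin ℓ) ℂ)
    (hF : ∀ M ∈ Matrix.unitaryGroup (Fin ℓ) ℂ, MvPolynomial.eval (fun p => M p.1 p.2) F = 0)
    {H : Matrix (Fin ℓ) (Fin ℓ) ℂ} (hH : H.IsHermitian) :
    MvPolynomial.eval (fun p => H p.1 p.2) F = 0 := by
  set U : Matrix (Fin ℓ) (Fin ℓ) ℂ := hH.eigenvectorUnitary.1 with hU
  have hUm : U ∈ Matrix.unitaryGroup (Fin ℓ) ℂ := hH.eigenvectorUnitary.2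
  let G : MvPolynomial (Fin ℓ) ℂ :=
    MvPolynomial.aeval (fun p : Fin ℓ × Fin ℓ =>
      ∑ a, MvPolynomial.C (U p.1 a * star (U p.2 a)) * MvPolynomial.X a) F
  have hG : ∀ z : Fin ℓ → ℂ, MvPolynomial.eval z G =
      MvPolynomial.eval (fun p => (U * Matrix.diagonal z * star U) p.1 p.2) F := by
    intro z
    have h1 : MvPolynomial.eval z G = MvPolynomial.aeval z G := by
      rw [MvPolynomial.aeval_eq_eval]
    rw [h1, ← AlgHom.comp_apply, MvPolynomial.comp_aeval]
    rw [MvPolynomial.aeval_eq_eval]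
    congr 2
    ext p
    rw [Matrix.mul_apply]
    simp only [map_sum, map_mul, MvPolynomial.aeval_C, MvPolynomial.aeval_X,
      Matrix.star_apply, Matrix.mul_diagonal]
    refine Finset.sum_congr rfl fun a _ => ?_
    simp only [Algebra.algebraMap_self, RingHom.id_apply]
    ring
  have hG0 : G = 0 := by
    refine MvPolynomial.funext_set (fun _ => (Metric.sphere (0 : ℂ) 1)) (fun _ => ?_) ?_
    · refine (isPreconnected_sphere (by simp [Complex.rank_real_complex]) 0 1).infinite_of_nontrivial
        ⟨1, by simp, -1, by simp, ?_⟩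
      norm_num
    · intro z hz
      rw [hG, map_zero]
      refine hF _ ?_
      refine mul_mem (mul_mem hUm ?_) (Unitary.star_mem hUm)
      rw [Matrix.mem_unitaryGroup_iff, Matrix.star_eq_conjTranspose,
        Matrix.diagonal_conjTranspose, Matrix.diagonal_mul_diagonal, ← Matrix.diagonal_one]
      congr 1
      ext a
      have : ‖z a‖ = 1 := by simpa using hz a (Set.mem_univ a)
      simp [Complex.mul_conj, Complex.normSq_eq_norm_sq, this]
  have hs := hH.spectral_theorem
  rw [Unitary.conjStarAlgAut_apply] at hs
  have := hG (RCLike.ofReal ∘ hH.eigenvalues)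
  rw [hG0, map_zero] at this
  rw [hs]
  exact this.symm

/-- Zariski density of `U(ℓ)` in all matrices: write `X = A + iB` with `A, B` Hermitian and use
that `t ↦ F (A + tB)` is a polynomial vanishing at all real `t`. -/
lemma eq_zero_of_unitary {ℓ : ℕ} (F : MvPolynomial (Fin ℓ × Fin ℓ) ℂ)
    (hF : ∀ M ∈ Matrix.unitaryGroup (Fin ℓ) ℂ, MvPolynomial.eval (fun p => M p.1 p.2) F = 0) :
    F = 0 := by
  refine MvPolynomial.funext fun x => ?_
  rw [map_zero]
  let X : Matrix (Fin ℓ) (Fin ℓ) ℂ := Matrix.of fun a b => x (a, b)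
  let A : Matrix (Fin ℓ) (Fin ℓ) ℂ := realPart X
  let B : Matrix (Fin ℓ) (Fin ℓ) ℂ := imaginaryPart X
  have hA : A.IsHermitian := (realPart X).2
  have hB : B.IsHermitian := (imaginaryPart X).2
  have hX : A + Complex.I • B = X := realPart_add_I_smul_imaginaryPart X
  let G : Polynomial ℂ := MvPolynomial.aeval (fun p : Fin ℓ × Fin ℓ =>
      Polynomial.C (A p.1 p.2) + Polynomial.C (B p.1 p.2) * Polynomial.X) F
  have hG : ∀ z : ℂ, Polynomial.eval z G =
      MvPolynomial.eval (fun p => (A + z • B) p.1 p.2) F := by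
    intro z
    rw [← Polynomial.coe_aeval_eq_eval]
    change Polynomial.aeval z G = _
    rw [← AlgHom.comp_apply, MvPolynomial.comp_aeval, MvPolynomial.aeval_eq_eval]
    congr 2
    ext p
    simp only [map_add, map_mul, Polynomial.aeval_C, Polynomial.aeval_X, Matrix.add_apply,
      Matrix.smul_apply, smul_eq_mul, Algebra.algebraMap_self, RingHom.id_apply, mul_comm z]
  have hG0 : G = 0 := by
    refine Polynomial.eq_zero_of_infinite_isRoot G ?_
    refine (Set.infinite_range_of_injective Complex.ofReal_injective).mono ?_
    rintro _ ⟨r, rfl⟩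
    change Polynomial.eval _ G = 0
    rw [hG]
    refine eval_hermitian F hF (hA.add ?_)
    change (((r : ℂ) • B)ᴴ) = _
    rw [Matrix.conjTranspose_smul, hB.eq]
    simp
  have := hG Complex.I
  rw [hG0, hX, Polynomial.eval_zero] at this
  exact this.symm

/-! ### Schur–Weyl duality -/

/-- The `n`-th tensor power of a matrix, in the basis of words `Fin n → Fin ℓ`. -/
def T {ℓ : ℕ} (n : ℕ) (X : Matrix (Fin ℓ) (Fin ℓ) ℂ) :
    Matrix (Fin n → Fin ℓ) (Fin n → Fin ℓ) ℂ :=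
  Matrix.of fun i j => ∏ k, X (i k) (j k)

lemma T_apply {ℓ n : ℕ} (X : Matrix (Fin ℓ) (Fin ℓ) ℂ) (i j : Fin n → Fin ℓ) :
    T n X i j = ∏ k, X (i k) (j k) := rfl

lemma T_mul {ℓ n : ℕ} (X Y : Matrix (Fin ℓ) (Fin ℓ) ℂ) : T n (X * Y) = T n X * T n Y := by
  ext i j
  simp only [T_apply, Matrix.mul_apply, Finset.prod_univ_sum, Finset.prod_mul_distrib]
  simp

lemma T_conjTranspose {ℓ n : ℕ} (X : Matrix (Fin ℓ) (Fin ℓ) ℂ) : T n Xᴴ = (T n X)ᴴ := by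
  ext i j
  simp [T_apply, Matrix.conjTranspose_apply]

lemma T_one {ℓ n : ℕ} : T n (1 : Matrix (Fin ℓ) (Fin ℓ) ℂ) = 1 := by
  ext i j
  simp only [T_apply, Matrix.one_apply]
  by_cases h : i = j
  · simp [h]
  · rw [if_neg h]
    obtain ⟨k, hk⟩ := Function.ne_iff.1 h
    exact Finset.prod_eq_zero (Finset.mem_univ k) (if_neg hk)

lemma trace_T {ℓ n : ℕ} (X : Matrix (Fin ℓ) (Fin ℓ) ℂ) :
    Matrix.trace (T n X) = Matrix.trace X ^ n := by
  simp only [Matrix.trace, Matrix.diag_apply, T_apply]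
  rw [← Fin.prod_const, Finset.prod_univ_sum]
  simp

/-- The exponent vector recording how often each value of `f` is taken. -/
def content {n : ℕ} {α : Type*} (f : Fin n → α) : α →₀ ℕ := ∑ k, Finsupp.single (f k) 1

lemma exists_perm_of_content_eq {n : ℕ} {α : Type*} {f g : Fin n → α}
    (h : content f = content g) : ∃ σ : Equiv.Perm (Fin n), g ∘ σ = f := by
  classical
  have hc : ∀ (f : Fin n → α) (c : α), content f c = Fintype.card {k // f k = c} := by
    intro f c
    simp [content, Finsupp.finsetSum_apply, Finsupp.single_apply, Fintype.card_subtype]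
  have hcard : ∀ c, Fintype.card {k // f k = c} = Fintype.card {k // g k = c} := by
    intro c
    rw [← hc, ← hc, h]
  exact ⟨Equiv.ofFiberEquiv fun c => Fintype.equivOfCardEq (hcard c),
    funext fun k => Equiv.ofFiberEquiv_map _ k⟩

/-- Invariance of a matrix on words under simultaneous place permutation. -/
def Inv {n ℓ : ℕ} (B : Matrix (Fin n → Fin ℓ) (Fin n → Fin ℓ) ℂ) : Prop :=
  ∀ (σ : Equiv.Perm (Fin n)) (i j : Fin n → Fin ℓ), B (i ∘ σ) (j ∘ σ) = B i j

/-- Polarization: a matrix commuting with all `M^{⊗n}`, `M` unitary, commutes with every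
`S_n`-invariant matrix `B`. The commutator with the generic tensor power is identically zero as a
polynomial in the matrix entries; an entry of `B` depends only on the corresponding monomial, so a
linear functional on polynomials sends the generic tensor power to `B`. -/
lemma commute_inv {n ℓ : ℕ} {A : Matrix (Fin n → Fin ℓ) (Fin n → Fin ℓ) ℂ}
    (hA : ∀ M ∈ Matrix.unitaryGroup (Fin ℓ) ℂ, A * T n M = T n M * A)
    {B : Matrix (Fin n → Fin ℓ) (Fin n → Fin ℓ) ℂ} (hB : Inv B) : A * B = B * A := by
  classical
  let mon : (Fin n → Fin ℓ) → (Fin n → Fin ℓ) → (Fin ℓ × Fin ℓ →₀ ℕ) :=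
    fun i j => content fun k => (i k, j k)
  obtain ⟨b, hb⟩ : ∃ b : (Fin ℓ × Fin ℓ →₀ ℕ) → ℂ, ∀ i j, B i j = b (mon i j) := by
    refine ⟨fun e => if h : ∃ p : (Fin n → Fin ℓ) × (Fin n → Fin ℓ), mon p.1 p.2 = e then
      B h.choose.1 h.choose.2 else 0, fun i j => ?_⟩
    have hex : ∃ p : (Fin n → Fin ℓ) × (Fin n → Fin ℓ), mon p.1 p.2 = mon i j := ⟨(i, j), rfl⟩
    refine Eq.trans ?_ (dif_pos hex).symm
    obtain ⟨σ, hσ⟩ := exists_perm_of_content_eq hex.choose_spec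
    rw [← hB σ i j]
    congr 1
    · ext k
      exact congrArg Fin.val (congrArg Prod.fst (congrFun hσ k))
    · ext k
      exact congrArg Fin.val (congrArg Prod.snd (congrFun hσ k))
  have hmon : ∀ (i j : Fin n → Fin ℓ) (M : Matrix (Fin ℓ) (Fin ℓ) ℂ),
      MvPolynomial.eval (fun p => M p.1 p.2) (MvPolynomial.monomial (mon i j) (1 : ℂ)) =
        T n M i j := by
    intro i j M
    have : MvPolynomial.monomial (mon i j) (1 : ℂ) = ∏ k, MvPolynomial.X (i k, j k) := by
      simp only [mon, content, MvPolynomial.monomial_sum_one]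
      rfl
    rw [this, map_prod]
    simp [T_apply]
  let L : MvPolynomial (Fin ℓ × Fin ℓ) ℂ →ₗ[ℂ] ℂ :=
    (MvPolynomial.basisMonomials (Fin ℓ × Fin ℓ) ℂ).constr ℂ b
  have hL : ∀ e, L (MvPolynomial.monomial e 1) = b e := by
    intro e
    rw [show MvPolynomial.monomial e (1 : ℂ) = MvPolynomial.basisMonomials _ ℂ e by simp]
    exact Module.Basis.constr_basis _ _ _ _
  ext i m
  let F : MvPolynomial (Fin ℓ × Fin ℓ) ℂ :=
    ∑ j, A i j • MvPolynomial.monomial (mon j m) (1 : ℂ) -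
      ∑ j, A j m • MvPolynomial.monomial (mon i j) (1 : ℂ)
  have hF : F = 0 := by
    refine eq_zero_of_unitary F fun M hM => ?_
    have := congrFun (congrFun (hA M hM) i) m
    rw [Matrix.mul_apply, Matrix.mul_apply] at this
    simp only [F, map_sub, map_sum, MvPolynomial.smul_eval, hmon]
    rw [this, sub_eq_zero]
    exact Finset.sum_congr rfl fun j _ => mul_comm _ _
  have hLF := congrArg L hF
  simp only [F, map_sub, map_sum, map_smul, hL, map_zero, sub_eq_zero, ← hb, smul_eq_mul] at hLF
  rw [Matrix.mul_apply, Matrix.mul_apply, hLF]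
  exact Finset.sum_congr rfl fun j _ => mul_comm _ _

lemma P_mul_apply {n ℓ : ℕ} (σ : Equiv.Perm (Fin n))
    (X : Matrix (Fin n → Fin ℓ) (Fin n → Fin ℓ) ℂ) (i j : Fin n → Fin ℓ) :
    ((P σ : Matrix (Fin n → Fin ℓ) (Fin n → Fin ℓ) ℂ) * X) i j = X (i ∘ σ) j := by
  simp [Matrix.mul_apply, P_apply]

lemma P_mul {n ℓ : ℕ} (σ τ : Equiv.Perm (Fin n)) :
    (P σ * P τ : Matrix (Fin n → Fin ℓ) (Fin n → Fin ℓ) ℂ) = P (σ * τ) := by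
  ext i j
  rw [P_mul_apply, P_apply, P_apply]
  rfl

lemma P_one {n ℓ : ℕ} : (P 1 : Matrix (Fin n → Fin ℓ) (Fin n → Fin ℓ) ℂ) = 1 := by
  ext i j
  rw [P_apply, Matrix.one_apply]
  rfl

/-- Averaging over `S_n` a linear projection onto the span of the place permutations yields an
equivariant one. -/
lemma exists_equivariant_proj (n ℓ : ℕ) :
    ∃ Q : Matrix (Fin n → Fin ℓ) (Fin n → Fin ℓ) ℂ →ₗ[ℂ]
        Matrix (Fin n → Fin ℓ) (Fin n → Fin ℓ) ℂ,
      (∀ X, Q X ∈ Submodule.span ℂ (Set.range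
        (P : Equiv.Perm (Fin n) → Matrix (Fin n → Fin ℓ) (Fin n → Fin ℓ) ℂ))) ∧
      Q 1 = 1 ∧ ∀ σ X, Q (P σ * X) = P σ * Q X := by
  classical
  set R := Submodule.span ℂ (Set.range
        (P : Equiv.Perm (Fin n) → Matrix (Fin n → Fin ℓ) (Fin n → Fin ℓ) ℂ)) with hR
  obtain ⟨q, hq⟩ := LinearMap.exists_leftInverse_of_injective R.subtype R.ker_subtype
  have hqR : ∀ X ∈ R, (q X : Matrix (Fin n → Fin ℓ) (Fin n → Fin ℓ) ℂ) = X := by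
    intro X hX
    exact congrArg Subtype.val (LinearMap.congr_fun hq ⟨X, hX⟩)
  have hPR : ∀ σ, ∀ X ∈ R, P σ * X ∈ R := by
    intro σ X hX
    refine Submodule.span_induction (p := fun X _ => P σ * X ∈ R) ?_ ?_ ?_ ?_ hX
    · rintro _ ⟨τ, rfl⟩
      rw [P_mul]
      exact Submodule.subset_span ⟨_, rfl⟩
    · simp
    · intro X Y _ _ hX hY
      rw [mul_add]
      exact add_mem hX hY
    · intro c X _ hX
      rw [Matrix.mul_smul]
      exact Submodule.smul_mem _ _ hX
  let S : Matrix (Fin n → Fin ℓ) (Fin n → Fin ℓ) ℂ →ₗ[ℂ]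
        Matrix (Fin n → Fin ℓ) (Fin n → Fin ℓ) ℂ :=
    ∑ τ : Equiv.Perm (Fin n), LinearMap.mulLeft ℂ (P τ⁻¹) ∘ₗ R.subtype ∘ₗ q ∘ₗ
      LinearMap.mulLeft ℂ (P τ)
  have hS : ∀ X, S X = ∑ τ : Equiv.Perm (Fin n),
      P τ⁻¹ * (q (P τ * X) : Matrix (Fin n → Fin ℓ) (Fin n → Fin ℓ) ℂ) := by
    intro X
    simp [S, LinearMap.sum_apply]
  have hN : ((n.factorial : ℕ) : ℂ) ≠ 0 := by exact_mod_cast n.factorial_ne_zero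
  refine ⟨((n.factorial : ℕ) : ℂ)⁻¹ • S, fun X => ?_, ?_, fun σ X => ?_⟩
  · rw [LinearMap.smul_apply, hS]
    exact Submodule.smul_mem _ _ (Submodule.sum_mem _ fun τ _ => hPR _ _ (q _).2)
  · rw [LinearMap.smul_apply, hS]
    have : ∀ τ : Equiv.Perm (Fin n),
        P τ⁻¹ * (q (P τ * 1) : Matrix (Fin n → Fin ℓ) (Fin n → Fin ℓ) ℂ) = 1 := by
      intro τ
      rw [mul_one, hqR _ (Submodule.subset_span ⟨τ, rfl⟩), P_mul, inv_mul_cancel, P_one]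
    simp only [this, Finset.sum_const, Finset.card_univ, Fintype.card_perm, Fintype.card_fin]
    rw [← Nat.cast_smul_eq_nsmul ℂ, smul_smul, inv_mul_cancel₀ hN, one_smul]
  · rw [LinearMap.smul_apply, LinearMap.smul_apply, Matrix.mul_smul, hS, hS, Finset.mul_sum]
    congr 1
    refine Fintype.sum_equiv (Equiv.mulRight σ) _ _ fun τ => ?_
    simp only [Equiv.coe_mulRight]
    rw [← mul_assoc, ← mul_assoc, P_mul, P_mul]
    simp

/-- The double commutant theorem for the symmetric group acting on words: what commutes with all
`S_n`-invariant matrices is a combination of place permutations. -/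
lemma mem_span_of_commute_inv {n ℓ : ℕ} {A : Matrix (Fin n → Fin ℓ) (Fin n → Fin ℓ) ℂ}
    (hA : ∀ B : Matrix (Fin n → Fin ℓ) (Fin n → Fin ℓ) ℂ, Inv B → A * B = B * A) :
    A ∈ Submodule.span ℂ (Set.range
      (P : Equiv.Perm (Fin n) → Matrix (Fin n → Fin ℓ) (Fin n → Fin ℓ) ℂ)) := by
  classical
  obtain ⟨Q, hQR, hQ1, hQP⟩ := exists_equivariant_proj n ℓ
  let B : (Fin n → Fin ℓ) → (Fin n → Fin ℓ) → Matrix (Fin n → Fin ℓ) (Fin n → Fin ℓ) ℂ :=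
    fun b d => Matrix.of fun a c => Q (Matrix.single c d 1) a b
  have hB : ∀ b d, Inv (B b d) := by
    intro b d τ a c
    simp only [B, Matrix.of_apply]
    have hs : P τ * Matrix.single (c ∘ τ) d (1 : ℂ) = Matrix.single c d 1 := by
      ext i j
      rw [P_mul_apply, Matrix.single_apply, Matrix.single_apply]
      have : (c ∘ τ = i ∘ τ) ↔ c = i := τ.surjective.right_cancellable
      simp only [this]
    rw [← P_mul_apply τ (Q _) a b, ← hQP, hs]
  have hQ : ∀ X a b, Q X a b = ∑ d, (B b d * X) a d := by
    intro X a b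
    conv_lhs => rw [Matrix.matrix_eq_sum_single X]
    rw [map_sum, Matrix.sum_apply]
    simp only [map_sum, Matrix.sum_apply, Matrix.mul_apply]
    rw [Finset.sum_comm]
    refine Finset.sum_congr rfl fun d _ => Finset.sum_congr rfl fun c _ => ?_
    have : Matrix.single c d (X c d) = X c d • Matrix.single c d (1 : ℂ) := by
      rw [Matrix.smul_single, smul_eq_mul, mul_one]
    rw [this, map_smul, Matrix.smul_apply, smul_eq_mul, mul_comm]
    rfl
  have hQA : Q A = A := by
    ext a b
    rw [hQ]
    simp only [← hA _ (hB b _)]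
    have h1 : ∀ c, ∑ d, B b d c d = (1 : Matrix (Fin n → Fin ℓ) (Fin n → Fin ℓ) ℂ) c b := by
      intro c
      rw [← hQ1, hQ]
      simp
    simp only [Matrix.mul_apply]
    rw [Finset.sum_comm]
    simp only [← Finset.mul_sum, h1]
    rw [← Matrix.mul_apply, mul_one]
  rw [← hQA]
  exact hQR A

/-- The commutant of the tensor-power action of `U(ℓ)`. -/
def commutant (n ℓ : ℕ) : Submodule ℂ (Matrix (Fin n → Fin ℓ) (Fin n → Fin ℓ) ℂ) where
  carrier := {A | ∀ M ∈ Matrix.unitaryGroup (Fin ℓ) ℂ, A * T n M = T n M * A}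
  add_mem' {A B} hA hB M hM := by rw [add_mul, mul_add, hA M hM, hB M hM]
  zero_mem' M _ := by simp
  smul_mem' c A hA M hM := by rw [Matrix.smul_mul, Matrix.mul_smul, hA M hM]

lemma P_mem_commutant {n ℓ : ℕ} (σ : Equiv.Perm (Fin n)) : P σ ∈ commutant n ℓ := by
  intro M _
  ext i j
  rw [P_mul_apply, T_apply]
  simp only [Matrix.mul_apply, P_apply, mul_ite, mul_one, mul_zero]
  rw [Finset.sum_eq_single (j ∘ σ.symm)]
  · rw [if_pos (by ext; simp), T_apply]
    refine Fintype.prod_equiv σ _ _ fun k => ?_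
    simp
  · intro b _ hb
    rw [if_neg]
    rintro rfl
    exact hb (by ext; simp)
  · simp

lemma commutant_eq_span (n ℓ : ℕ) : commutant n ℓ = Submodule.span ℂ (Set.range
      (P : Equiv.Perm (Fin n) → Matrix (Fin n → Fin ℓ) (Fin n → Fin ℓ) ℂ)) := by
  apply le_antisymm
  · intro A hA
    exact mem_span_of_commute_inv fun B hB => commute_inv hA hB
  · rw [Submodule.span_le]
    rintro _ ⟨σ, rfl⟩
    exact P_mem_commutant σ

/-! ### Haar averages -/

instance (ℓ : ℕ) : BorelSpace (Matrix.unitaryGroup (Fin ℓ) ℂ) := ⟨rfl⟩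

section Haar

variable {ℓ : ℕ} (μ : Measure (Matrix.unitaryGroup (Fin ℓ) ℂ)) [IsProbabilityMeasure μ]

lemma continuous_entry (a b : Fin ℓ) :
    Continuous fun M : Matrix.unitaryGroup (Fin ℓ) ℂ => (M : Matrix (Fin ℓ) (Fin ℓ) ℂ) a b :=
  continuous_subtype_val.matrix_elem a b

lemma continuous_tr : Continuous fun M : Matrix.unitaryGroup (Fin ℓ) ℂ =>
    Matrix.trace (M : Matrix (Fin ℓ) (Fin ℓ) ℂ) :=
  continuous_subtype_val.matrix_trace

lemma norm_tr_le (M : Matrix.unitaryGroup (Fin ℓ) ℂ) :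
    ‖Matrix.trace (M : Matrix (Fin ℓ) (Fin ℓ) ℂ)‖ ≤ ℓ := by
  refine (norm_sum_le _ _).trans ?_
  refine (Finset.sum_le_sum fun a _ => entry_norm_bound_of_unitary M.2 a a).trans ?_
  simp

lemma continuous_T_entry (n : ℕ) (i j : Fin n → Fin ℓ) :
    Continuous fun M : Matrix.unitaryGroup (Fin ℓ) ℂ => T n (M : Matrix (Fin ℓ) (Fin ℓ) ℂ) i j := by
  simp only [T_apply]
  exact continuous_finsetProd _ fun k _ => continuous_entry (i k) (j k)

lemma norm_T_entry_le (n : ℕ) (M : Matrix.unitaryGroup (Fin ℓ) ℂ) (i j : Fin n → Fin ℓ) :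
    ‖T n (M : Matrix (Fin ℓ) (Fin ℓ) ℂ) i j‖ ≤ 1 := by
  rw [T_apply, norm_prod]
  exact Finset.prod_le_one (fun _ _ => norm_nonneg _)
    fun k _ => entry_norm_bound_of_unitary M.2 _ _

lemma integrable_T_mul (n : ℕ) (i j k l : Fin n → Fin ℓ) :
    Integrable (fun M : Matrix.unitaryGroup (Fin ℓ) ℂ =>
      T n (M : Matrix (Fin ℓ) (Fin ℓ) ℂ) i j * star (T n (M : Matrix (Fin ℓ) (Fin ℓ) ℂ) k l)) μ := by
  refine Integrable.of_bound (C := 1) ?_ (Filter.Eventually.of_forall fun M => ?_)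
  · exact ((continuous_T_entry n i j).mul (continuous_T_entry n k l).star).aestronglyMeasurable
  · rw [norm_mul, norm_star]
    exact mul_le_one₀ (norm_T_entry_le n M i j) (norm_nonneg _) (norm_T_entry_le n M k l)

lemma conj_entry (n : ℕ) (M : Matrix.unitaryGroup (Fin ℓ) ℂ)
    (X : Matrix (Fin n → Fin ℓ) (Fin n → Fin ℓ) ℂ) (i k : Fin n → Fin ℓ) :
    (T n (M : Matrix (Fin ℓ) (Fin ℓ) ℂ) * X * (T n (M : Matrix (Fin ℓ) (Fin ℓ) ℂ))ᴴ) i k =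
      ∑ l, ∑ j, X j l * (T n (M : Matrix (Fin ℓ) (Fin ℓ) ℂ) i j *
        star (T n (M : Matrix (Fin ℓ) (Fin ℓ) ℂ) k l)) := by
  simp only [Matrix.mul_apply, Matrix.conjTranspose_apply, Finset.sum_mul]
  refine Finset.sum_congr rfl fun l _ => Finset.sum_congr rfl fun j _ => ?_
  ring

lemma integrable_conj_entry (n : ℕ)
    (X : Matrix (Fin n → Fin ℓ) (Fin n → Fin ℓ) ℂ) (i k : Fin n → Fin ℓ) :
    Integrable (fun M : Matrix.unitaryGroup (Fin ℓ) ℂ =>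
      (T n (M : Matrix (Fin ℓ) (Fin ℓ) ℂ) * X * (T n (M : Matrix (Fin ℓ) (Fin ℓ) ℂ))ᴴ) i k) μ := by
  simp only [conj_entry]
  exact integrable_finsetSum _ fun l _ => integrable_finsetSum _ fun j _ =>
    (integrable_T_mul μ n i j k l).const_mul _

/-- Averaging over conjugation by `M^{⊗n}`; a projection onto the commutant (`isProj_avg`). -/
def avg (n : ℕ) : Matrix (Fin n → Fin ℓ) (Fin n → Fin ℓ) ℂ →ₗ[ℂ]
    Matrix (Fin n → Fin ℓ) (Fin n → Fin ℓ) ℂ where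
  toFun X := Matrix.of fun i k => ∫ M : Matrix.unitaryGroup (Fin ℓ) ℂ,
    (T n (M : Matrix (Fin ℓ) (Fin ℓ) ℂ) * X * (T n (M : Matrix (Fin ℓ) (Fin ℓ) ℂ))ᴴ) i k ∂μ
  map_add' X Y := by
    ext i k
    simp only [Matrix.of_apply, Matrix.add_apply]
    rw [← integral_add (integrable_conj_entry μ n X i k) (integrable_conj_entry μ n Y i k)]
    simp only [mul_add, add_mul, Matrix.add_apply]
  map_smul' c X := by
    ext i k
    simp only [Matrix.of_apply, Matrix.smul_apply, RingHom.id_apply, smul_eq_mul]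
    rw [← integral_const_mul]
    simp only [Matrix.mul_smul, Matrix.smul_mul, Matrix.smul_apply, smul_eq_mul]

lemma avg_apply (n : ℕ) (X : Matrix (Fin n → Fin ℓ) (Fin n → Fin ℓ) ℂ) (i k : Fin n → Fin ℓ) :
    avg μ n X i k = ∫ M : Matrix.unitaryGroup (Fin ℓ) ℂ,
    (T n (M : Matrix (Fin ℓ) (Fin ℓ) ℂ) * X *
      (T n (M : Matrix (Fin ℓ) (Fin ℓ) ℂ))ᴴ) i k ∂μ := rfl

lemma T_mul_conjTranspose (n : ℕ) {M : Matrix (Fin ℓ) (Fin ℓ) ℂ}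
    (hM : M ∈ Matrix.unitaryGroup (Fin ℓ) ℂ) : T n M * (T n M)ᴴ = 1 := by
  rw [← T_conjTranspose, ← T_mul, ← Matrix.star_eq_conjTranspose,
    Matrix.mem_unitaryGroup_iff.1 hM, T_one]

lemma conjTranspose_mul_T (n : ℕ) {M : Matrix (Fin ℓ) (Fin ℓ) ℂ}
    (hM : M ∈ Matrix.unitaryGroup (Fin ℓ) ℂ) : (T n M)ᴴ * T n M = 1 := by
  rw [← T_conjTranspose, ← T_mul, ← Matrix.star_eq_conjTranspose,
    Matrix.mem_unitaryGroup_iff'.1 hM, T_one]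

lemma conj_avg [μ.IsMulLeftInvariant] (n : ℕ) (X : Matrix (Fin n → Fin ℓ) (Fin n → Fin ℓ) ℂ)
    (N : Matrix.unitaryGroup (Fin ℓ) ℂ) :
    T n (N : Matrix (Fin ℓ) (Fin ℓ) ℂ) * avg μ n X * (T n (N : Matrix (Fin ℓ) (Fin ℓ) ℂ))ᴴ =
      avg μ n X := by
  ext i k
  rw [conj_entry]
  simp only [avg_apply]
  rw [← integral_mul_left_eq_self _ N]
  have : ∀ M : Matrix.unitaryGroup (Fin ℓ) ℂ,
      (T n ((N * M : Matrix.unitaryGroup (Fin ℓ) ℂ) : Matrix (Fin ℓ) (Fin ℓ) ℂ) * X *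
        (T n ((N * M : Matrix.unitaryGroup (Fin ℓ) ℂ) : Matrix (Fin ℓ) (Fin ℓ) ℂ))ᴴ) =
      T n (N : Matrix (Fin ℓ) (Fin ℓ) ℂ) * (T n (M : Matrix (Fin ℓ) (Fin ℓ) ℂ) * X *
        (T n (M : Matrix (Fin ℓ) (Fin ℓ) ℂ))ᴴ) * (T n (N : Matrix (Fin ℓ) (Fin ℓ) ℂ))ᴴ := by
    intro M
    rw [Submonoid.coe_mul, T_mul, Matrix.conjTranspose_mul]
    simp only [mul_assoc]
  simp only [this, conj_entry n N]
  rw [integral_finsetSum]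
  · refine Finset.sum_congr rfl fun l _ => ?_
    rw [integral_finsetSum]
    · refine Finset.sum_congr rfl fun j _ => ?_
      rw [integral_mul_const]
    · exact fun j _ => (integrable_conj_entry μ n X j l).mul_const _
  · exact fun l _ => integrable_finsetSum _ fun j _ =>
      (integrable_conj_entry μ n X j l).mul_const _

lemma isProj_avg [μ.IsMulLeftInvariant] (n : ℕ) :
    LinearMap.IsProj (commutant n ℓ) (avg μ n) where
  map_mem X := by
    intro N hN
    conv_rhs => rw [← conj_avg μ n X ⟨N, hN⟩]
    conv_lhs => rw [← conj_avg μ n X ⟨N, hN⟩]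
    rw [mul_assoc, conjTranspose_mul_T n hN, mul_one]
    have := conj_avg μ n X ⟨N, hN⟩
    simp only at this
    rw [this]
  map_id X hX := by
    ext i k
    rw [avg_apply]
    have : ∀ M : Matrix.unitaryGroup (Fin ℓ) ℂ, (T n (M : Matrix (Fin ℓ) (Fin ℓ) ℂ) * X *
        (T n (M : Matrix (Fin ℓ) (Fin ℓ) ℂ))ᴴ) = X := by
      intro M
      rw [← hX M M.2, mul_assoc, T_mul_conjTranspose n M.2, mul_one]
    simp [this]

lemma trace_avg (n : ℕ) :
    LinearMap.trace ℂ _ (avg μ n) = ∫ M : Matrix.unitaryGroup (Fin ℓ) ℂ,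
      Matrix.trace (M : Matrix (Fin ℓ) (Fin ℓ) ℂ) ^ n *
        star (Matrix.trace (M : Matrix (Fin ℓ) (Fin ℓ) ℂ)) ^ n ∂μ := by
  classical
  rw [LinearMap.trace_eq_matrix_trace ℂ (Matrix.stdBasis ℂ (Fin n → Fin ℓ) (Fin n → Fin ℓ)),
    Matrix.trace, Fintype.sum_prod_type]
  have h1 : ∀ i j : Fin n → Fin ℓ, (LinearMap.toMatrix
      (Matrix.stdBasis ℂ (Fin n → Fin ℓ) (Fin n → Fin ℓ))
      (Matrix.stdBasis ℂ (Fin n → Fin ℓ) (Fin n → Fin ℓ)) (avg μ n)).diag (i, j) =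
      ∫ M : Matrix.unitaryGroup (Fin ℓ) ℂ, T n (M : Matrix (Fin ℓ) (Fin ℓ) ℂ) i i *
        star (T n (M : Matrix (Fin ℓ) (Fin ℓ) ℂ) j j) ∂μ := by
    intro i j
    rw [Matrix.diag_apply, LinearMap.toMatrix_apply]
    have hr : ∀ X : Matrix (Fin n → Fin ℓ) (Fin n → Fin ℓ) ℂ,
        (Matrix.stdBasis ℂ (Fin n → Fin ℓ) (Fin n → Fin ℓ)).repr X (i, j) = X i j := by
      intro X
      rfl
    rw [hr, Matrix.stdBasis_eq_single, avg_apply]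
    refine integral_congr_ae (Filter.Eventually.of_forall fun M => ?_)
    simp only [conj_entry]
    rw [Finset.sum_eq_single j, Finset.sum_eq_single i]
    · simp
    · intro b _ hb
      simp [hb.symm]
    · simp
    · intro b _ hb
      simp [hb.symm]
    · simp
  simp only [h1]
  have h2 : ∀ M : Matrix.unitaryGroup (Fin ℓ) ℂ,
      Matrix.trace (M : Matrix (Fin ℓ) (Fin ℓ) ℂ) ^ n *
        star (Matrix.trace (M : Matrix (Fin ℓ) (Fin ℓ) ℂ)) ^ n =
      ∑ i, ∑ j, T n (M : Matrix (Fin ℓ) (Fin ℓ) ℂ) i i *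
        star (T n (M : Matrix (Fin ℓ) (Fin ℓ) ℂ) j j) := by
    intro M
    rw [← star_pow, ← trace_T, Matrix.trace, star_sum, Finset.sum_mul_sum]
    rfl
  simp only [h2]
  rw [integral_finsetSum]
  · refine Finset.sum_congr rfl fun i _ => ?_
    rw [integral_finsetSum]
    exact fun j _ => integrable_T_mul μ n i i j j
  · exact fun i _ => integrable_finsetSum _ fun j _ => integrable_T_mul μ n i i j j

/-- The even moments of the trace count permutations without long increasing subsequences. -/
lemma integral_diag [μ.IsMulLeftInvariant] (n : ℕ) :
    ∫ M : Matrix.unitaryGroup (Fin ℓ) ℂ,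
      Matrix.trace (M : Matrix (Fin ℓ) (Fin ℓ) ℂ) ^ n *
        star (Matrix.trace (M : Matrix (Fin ℓ) (Fin ℓ) ℂ)) ^ n ∂μ =
      (Nat.card {π : Equiv.Perm (Fin n) // lisLen n π ≤ ℓ} : ℂ) := by
  rw [← trace_avg, (isProj_avg μ n).trace, commutant_eq_span, finrank_span_P]

end Haar

/-- Off-diagonal moments vanish, by invariance of the measure under a scalar unitary `z · 1`, which
multiplies the integrand by `z ^ a * star z ^ b`. -/
lemma integral_offdiag {ℓ : ℕ} (μ : Measure (Matrix.unitaryGroup (Fin ℓ) ℂ))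
    [μ.IsMulLeftInvariant] {a b : ℕ} (hab : a ≠ b) :
    ∫ M : Matrix.unitaryGroup (Fin ℓ) ℂ,
      Matrix.trace (M : Matrix (Fin ℓ) (Fin ℓ) ℂ) ^ a *
        star (Matrix.trace (M : Matrix (Fin ℓ) (Fin ℓ) ℂ)) ^ b ∂μ = 0 := by
  -- `z = exp (iπ / (a - b))` multiplies the integrand by `-1`.
  obtain ⟨z, hz, hne⟩ : ∃ z : ℂ, z * star z = 1 ∧ z ^ a * star z ^ b ≠ 1 := by
    let θ : ℝ := Real.pi / ((a : ℝ) - b)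
    have hd : ((a : ℝ) - b) ≠ 0 := sub_ne_zero.2 (by exact_mod_cast hab)
    have hst : star (Complex.exp (θ * Complex.I)) = Complex.exp (-(θ * Complex.I)) := by
      change (starRingEnd ℂ) _ = _
      rw [← Complex.exp_conj]
      simp
    refine ⟨Complex.exp (θ * Complex.I), ?_, ?_⟩
    · rw [hst, ← Complex.exp_add]
      simp
    · rw [hst, ← Complex.exp_nat_mul, ← Complex.exp_nat_mul, ← Complex.exp_add]
      have : (a : ℂ) * (θ * Complex.I) + b * (-(θ * Complex.I)) = Real.pi * Complex.I := by
        have h : ((a : ℝ) - b) * θ = Real.pi := mul_div_cancel₀ _ hd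
        rw [← h]
        push_cast
        ring
      rw [this, Complex.exp_pi_mul_I]
      norm_num
  have hN : z • (1 : Matrix (Fin ℓ) (Fin ℓ) ℂ) ∈ Matrix.unitaryGroup (Fin ℓ) ℂ := by
    rw [Matrix.mem_unitaryGroup_iff, star_smul, star_one, smul_mul_smul_comm, hz, one_smul,
      mul_one]
  have key := integral_mul_left_eq_self (μ := μ)
    (fun M : Matrix.unitaryGroup (Fin ℓ) ℂ => Matrix.trace (M : Matrix (Fin ℓ) (Fin ℓ) ℂ) ^ a *
        star (Matrix.trace (M : Matrix (Fin ℓ) (Fin ℓ) ℂ)) ^ b) ⟨_, hN⟩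
  have hM : ∀ M : Matrix.unitaryGroup (Fin ℓ) ℂ, Matrix.trace
      (((⟨_, hN⟩ : Matrix.unitaryGroup (Fin ℓ) ℂ) * M : Matrix.unitaryGroup (Fin ℓ) ℂ) :
        Matrix (Fin ℓ) (Fin ℓ) ℂ) = z * Matrix.trace (M : Matrix (Fin ℓ) (Fin ℓ) ℂ) := by
    intro M
    rw [Submonoid.coe_mul, smul_mul_assoc, one_mul, Matrix.trace_smul, smul_eq_mul]
  simp only [hM, star_mul', mul_pow] at key
  have h3 : ∀ t : ℂ, z ^ a * t ^ a * (star z ^ b * star t ^ b) =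
      (z ^ a * star z ^ b) * (t ^ a * star t ^ b) := fun t => by ring
  simp only [h3] at key
  rw [integral_const_mul] at key
  by_contra h0
  exact hne ((mul_eq_right₀ h0).1 key)

lemma hasSum_mul_of_norm {f g : ℕ → ℂ} {a b : ℂ} (hf : Summable fun n => ‖f n‖)
    (hg : Summable fun n => ‖g n‖) (hfa : HasSum f a) (hgb : HasSum g b) :
    HasSum (fun p : ℕ × ℕ => f p.1 * g p.2) (a * b) :=
  hfa.mul hgb (summable_mul_of_summable_norm hf hg)

lemma hasSum_exp_mul_exp (u v : ℂ) :
    HasSum (fun p : ℕ × ℕ => u ^ p.1 / (p.1.factorial : ℂ) * (v ^ p.2 / (p.2.factorial : ℂ)))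
      (Complex.exp u * Complex.exp v) := by
  have h1 : ∀ z : ℂ, Summable fun n : ℕ => ‖z ^ n / (n.factorial : ℂ)‖ := fun z =>
    NormedSpace.norm_expSeries_div_summable z
  have h2 : ∀ z : ℂ, HasSum (fun n : ℕ => z ^ n / (n.factorial : ℂ)) (Complex.exp z) := fun z => by
    rw [Complex.exp_eq_exp_ℂ]
    exact NormedSpace.expSeries_div_hasSum_exp z
  have h3 := hasSum_mul_of_norm (h1 u) (h1 v) (h2 u) (h2 v)
  exact h3

end Gessel

theorem gessel_identity (ℓ : ℕ) (hℓ : 1 ≤ ℓ) (x : ℝ)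
    (μ : Measure (Matrix.unitaryGroup (Fin ℓ) ℂ)) [IsProbabilityMeasure μ]
    [μ.IsMulLeftInvariant] :
    HasSum
      (fun n : ℕ =>
        ((x ^ (2 * n) / (Nat.factorial n : ℝ) ^ 2 *
          (Nat.card {π : Equiv.Perm (Fin n) // lisLen n π ≤ ℓ} : ℝ) : ℝ) : ℂ))
      (∫ M : Matrix.unitaryGroup (Fin ℓ) ℂ,
        Complex.exp ((x : ℂ) * (Matrix.trace (M : Matrix (Fin ℓ) (Fin ℓ) ℂ) +
          (starRingEnd ℂ) (Matrix.trace (M : Matrix (Fin ℓ) (Fin ℓ) ℂ)))) ∂μ) := by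
  let t : Matrix.unitaryGroup (Fin ℓ) ℂ → ℂ := fun M =>
    Matrix.trace (M : Matrix (Fin ℓ) (Fin ℓ) ℂ)
  have ht : Continuous t := Gessel.continuous_tr
  -- the double series of `exp (x t) * exp (x t̄)`
  let F : ℕ × ℕ → Matrix.unitaryGroup (Fin ℓ) ℂ → ℂ := fun p M =>
    ((x : ℂ) * t M) ^ p.1 / (p.1.factorial : ℂ) * (((x : ℂ) * star (t M)) ^ p.2 /
      (p.2.factorial : ℂ))
  let bd : ℕ × ℕ → ℝ := fun p =>
    (|x| * ℓ) ^ p.1 / (p.1.factorial : ℝ) * ((|x| * ℓ) ^ p.2 / (p.2.factorial : ℝ))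
  have hbd : Summable bd := by
    have h := Real.summable_pow_div_factorial (|x| * ℓ)
    exact h.mul_of_nonneg h (fun n => by positivity) (fun n => by positivity)
  have hF : HasSum (fun p => ∫ M, F p M ∂μ)
      (∫ M, Complex.exp ((x : ℂ) * (t M + (starRingEnd ℂ) (t M))) ∂μ) := by
    refine hasSum_integral_of_dominated_convergence (fun p _ => bd p) (fun p => ?_)
      (fun p => Filter.Eventually.of_forall fun M => ?_)
      (Filter.Eventually.of_forall fun _ => hbd) (integrable_const _)
      (Filter.Eventually.of_forall fun M => ?_)
    · refine Continuous.aestronglyMeasurable ?_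
      have := ht.star
      fun_prop
    · simp only [F, bd, norm_mul, norm_div, norm_pow, norm_star, Complex.norm_real,
        Real.norm_eq_abs, Complex.norm_natCast]
      have := Gessel.norm_tr_le M
      gcongr
    · have h := Gessel.hasSum_exp_mul_exp (x * t M) (x * star (t M))
      rwa [← Complex.exp_add, ← mul_add] at h
  have hint : ∀ p : ℕ × ℕ, ∫ M, F p M ∂μ = (x : ℂ) ^ (p.1 + p.2) /
      ((p.1.factorial : ℂ) * p.2.factorial) * ∫ M, t M ^ p.1 * star (t M) ^ p.2 ∂μ := by
    intro p
    rw [← integral_const_mul]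
    refine integral_congr_ae (Filter.Eventually.of_forall fun M => ?_)
    simp only [F, mul_pow, pow_add]
    field_simp
  have hinj : Function.Injective fun n : ℕ => (n, n) := fun a b h => congrArg Prod.fst h
  have hzero : ∀ p ∉ Set.range (fun n : ℕ => (n, n)), ∫ M, F p M ∂μ = 0 := by
    rintro ⟨a, b⟩ hp
    have hab : a ≠ b := by
      rintro rfl
      exact hp ⟨a, rfl⟩
    rw [hint, Gessel.integral_offdiag μ hab, mul_zero]
  have hdiag := (hinj.hasSum_iff hzero).2 hF
  have hterm : ((fun p => ∫ M, F p M ∂μ) ∘ fun n : ℕ => (n, n)) = fun n : ℕ =>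
      ((x ^ (2 * n) / (Nat.factorial n : ℝ) ^ 2 *
        (Nat.card {π : Equiv.Perm (Fin n) // lisLen n π ≤ ℓ} : ℝ) : ℝ) : ℂ) := by
    funext n
    rw [Function.comp_apply, hint, Gessel.integral_diag μ n]
    push_cast
    rw [two_mul, sq]
  rw [hterm] at hdiag
  exact hdiag
end
end

section
/- For all integers ℓ ≥ 1, k ≥ 1 and every x ∈ ℝ, the series Σ_{n=0}^{∞} (xⁿ/n!) · #{ words w of length n on k letters with σ(w) ≤ ℓ } converges and equals (as a complex number) the Haar integral E_{U(ℓ)}[ det(I + M)^k · exp( x · conj(tr M) ) ]. -/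
/-!
Write `V = ℂ^ℓ`. The function `det (1 + M)^k = det (1 + M ⊗ 1_k)` is the character of the exterior
algebra of `V ⊗ ℂᵏ`, and `conj (tr M)^n` is the character of the dual of `V^{⊗n}`. Scalar matrices
kill the components of unequal degree, so `∫ det (1 + M)^k conj (tr M)^n` is the dimension of the
space of `U(ℓ)`-equivariant maps `V^{⊗n} → Λⁿ(V ⊗ ℂᵏ)` (`integral_det_mul_pow`); integrating the
exponential series term by term then gives the claim, once this dimension is shown to be the number
of words `w` of length `n` on `k` letters with `σ(w) ≤ ℓ`.

By the first fundamental theorem for `U(ℓ)`, the commutant of `M ↦ M^{⊗n}` is spanned by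
permutations of the tensor factors (`exists_perm_combination`). It follows that the equivariant maps
are spanned by the maps `v₁ ⊗ ⋯ ⊗ vₙ ↦ (v₁ ⊗ e_{w(1)}) ∧ ⋯ ∧ (vₙ ⊗ e_{w(n)})`, one for each word `w`
(`wordVec`, `mem_span_of_invariant`). Antisymmetrising over `ℓ + 1` vectors of `V` gives zero, so
if `w` has a weakly increasing subsequence of length `ℓ + 1`, then the map of `w` is a
combination of the maps of lexicographically larger words; hence the words with `σ(w) ≤ ℓ` already span
(`wordVec_mem_span`). For such a word the positions can be coloured with `ℓ` colours, a position
receiving the length of the longest weakly increasing subsequence it continues; evaluating at the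
basis tensor of the colouring gives a triangular system, whence linear independence
(`linearIndependent_wordVec`).
-/

open MeasureTheory Matrix

noncomputable section

/-- `wordLis k n w` is the length of the longest weakly increasing subsequence of the word
`w : {1,…,n} → {1,…,k}`: the largest `m` for which there exist indices `i₁ < ⋯ < i_m` with
`w(i₁) ≤ w(i₂) ≤ ⋯ ≤ w(i_m)`. -/
noncomputable def wordLis (k n : ℕ) (w : Fin n → Fin k) : ℕ :=
  sSup {m : ℕ | ∃ s : Fin m → Fin n, StrictMono s ∧ Monotone (w ∘ s)}

set_option linter.unusedSectionVars false

/-! ### Tensor powers and antisymmetrised tensor powers of matrices -/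

section Algebra

variable {n : ℕ} {X : Type*} [Fintype X] [DecidableEq X]

/-- The matrix of `M^{⊗n}` in the basis of pure tensors, which is indexed by words. -/
def tensorPow (n : ℕ) {X : Type*} (M : Matrix X X ℂ) : Matrix (Fin n → X) (Fin n → X) ℂ :=
  Matrix.of fun a b => ∏ i, M (a i) (b i)

/-- The matrix of `M^{⊗n}` composed with the projection onto antisymmetric tensors; its entries are
the `n × n` minors of `M` divided by `n!`. -/
def altPow (n : ℕ) {X : Type*} (M : Matrix X X ℂ) : Matrix (Fin n → X) (Fin n → X) ℂ :=
  Matrix.of fun a b => (n.factorial : ℂ)⁻¹ * (M.submatrix a b).det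

/-- Multilinearity of the determinant in its columns. -/
lemma sum_det_mul_prod (A : Fin n → X → Fin n → ℂ) (B : Fin n → X → ℂ) :
    ∑ c : Fin n → X, (Matrix.of fun i j => A i (c j) j).det * ∏ j, B j (c j) =
      (Matrix.of fun i j => ∑ y, A i y j * B j y).det := by
  simp only [Matrix.det_apply', Matrix.of_apply, Finset.sum_mul]
  rw [Finset.sum_comm]
  refine Finset.sum_congr rfl fun σ _ => ?_
  rw [Finset.prod_univ_sum, Fintype.piFinset_univ, Finset.mul_sum]
  refine Finset.sum_congr rfl fun c _ => ?_
  rw [Finset.prod_mul_distrib]; ring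

/-- Multilinearity of the determinant in its rows. -/
lemma sum_prod_mul_det (A : Fin n → X → Fin n → ℂ) (B : Fin n → X → ℂ) :
    ∑ c : Fin n → X, (∏ j, B j (c j)) * (Matrix.of fun i j => A i (c i) j).det =
      (Matrix.of fun i j => ∑ y, B i y * A i y j).det := by
  rw [← Matrix.det_transpose]
  have := sum_det_mul_prod (fun i y j => A j y i) B
  simp only [mul_comm (A _ _ _)] at this
  refine Eq.trans ?_ (this.trans rfl)
  refine Finset.sum_congr rfl fun c _ => ?_
  rw [← Matrix.det_transpose, mul_comm]; rfl

lemma tensorPow_mul (M N : Matrix X X ℂ) :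
    tensorPow n (M * N) = tensorPow n M * tensorPow n N := by
  ext a b
  simp only [tensorPow, Matrix.of_apply, Matrix.mul_apply, Finset.prod_univ_sum,
    Fintype.piFinset_univ, Finset.prod_mul_distrib]

lemma tensorPow_one : tensorPow n (1 : Matrix X X ℂ) = 1 := by
  ext a b
  simp only [tensorPow, Matrix.of_apply, Matrix.one_apply, Finset.prod_ite_zero, Finset.mem_univ,
    forall_true_left, Finset.prod_const_one, funext_iff]

lemma tensorPow_conjTranspose (M : Matrix X X ℂ) :
    tensorPow n Mᴴ = (tensorPow n M)ᴴ := by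
  ext a b
  simp [tensorPow, Matrix.conjTranspose_apply]

lemma trace_tensorPow (M : Matrix X X ℂ) : (tensorPow n M).trace = M.trace ^ n := by
  simp only [Matrix.trace, Matrix.diag, tensorPow, Matrix.of_apply]
  rw [← Fintype.piFinset_univ,
    ← Finset.prod_univ_sum (fun _ : Fin n => Finset.univ) (fun _ x => M x x)]
  simp

lemma tensorPow_mul_altPow (M N : Matrix X X ℂ) :
    tensorPow n M * altPow n N = altPow n (M * N) := by
  ext a b
  simp only [Matrix.mul_apply, tensorPow, altPow, Matrix.of_apply]
  have := sum_prod_mul_det (fun i y j => N y (b j)) (fun i y => M (a i) y)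
  calc _ = (n.factorial : ℂ)⁻¹ * ∑ c : Fin n → X, (∏ i, M (a i) (c i)) *
          (Matrix.of fun i j => N (c i) (b j)).det := by
        rw [Finset.mul_sum]
        refine Finset.sum_congr rfl fun c _ => ?_
        rw [mul_left_comm]; rfl
    _ = _ := by rw [this]; rfl

/-- The Cauchy–Binet formula. -/
lemma altPow_mul (M N : Matrix X X ℂ) : altPow n M * altPow n N = altPow n (M * N) := by
  ext a b
  simp only [Matrix.mul_apply, altPow, Matrix.of_apply]
  have key : ∀ σ : Equiv.Perm (Fin n), ∑ c : Fin n → X, (M.submatrix a c).det *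
      (((Equiv.Perm.sign σ : ℤ) : ℂ) * ∏ i, N (c (σ i)) (b i)) = ((M * N).submatrix a b).det := by
    intro σ
    rw [← (Equiv.arrowCongr σ (Equiv.refl X)).sum_comp]
    have h := sum_det_mul_prod (fun i y _ => M (a i) y) (fun j y => N y (b j))
    refine Eq.trans (Finset.sum_congr rfl fun c _ => ?_) h
    have h2 : M.submatrix a (Equiv.arrowCongr σ (Equiv.refl X) c) =
        (M.submatrix a c).submatrix id σ.symm := by
      ext i j; simp
    rw [h2, Matrix.det_permute']
    have h3 : ((Equiv.Perm.sign σ.symm : ℤ) : ℂ) * ((Equiv.Perm.sign σ : ℤ) : ℂ) = 1 := by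
      rw [Equiv.Perm.sign_symm]; norm_cast; simp
    simp only [Equiv.arrowCongr_apply, Function.comp, Equiv.symm_apply_apply, Equiv.refl_apply]
    calc _ = (((Equiv.Perm.sign σ.symm : ℤ) : ℂ) * ((Equiv.Perm.sign σ : ℤ) : ℂ)) *
          ((M.submatrix a c).det * ∏ i, N (c i) (b i)) := by ring
      _ = _ := by rw [h3, one_mul]; rfl
  have hn : (n.factorial : ℂ) ≠ 0 := by exact_mod_cast n.factorial_ne_zero
  calc _ = (n.factorial : ℂ)⁻¹ * ((n.factorial : ℂ)⁻¹ * ∑ σ : Equiv.Perm (Fin n),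
        ∑ c : Fin n → X, (M.submatrix a c).det *
      (((Equiv.Perm.sign σ : ℤ) : ℂ) * ∏ i, N (c (σ i)) (b i))) := by
        rw [Finset.sum_comm, Finset.mul_sum, Finset.mul_sum]
        refine Finset.sum_congr rfl fun c _ => ?_
        rw [← Finset.mul_sum, Matrix.det_apply' (N.submatrix c b)]
        simp only [Matrix.submatrix_apply]
        ring
    _ = _ := by
      simp only [key, Finset.sum_const, Finset.card_univ, Fintype.card_perm, Fintype.card_fin,
        nsmul_eq_mul]
      rw [inv_mul_cancel_left₀ hn]

/-- The trace of the antisymmetrised tensor power is the sum of the principal `n × n` minors,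
that is, a coefficient of `det (1 + X M)`. -/
lemma trace_altPow (M : Matrix X X ℂ) :
    (altPow n M).trace =
      (det (1 + (Polynomial.X : Polynomial ℂ) • M.map Polynomial.C)).coeff n := by
  classical
  rw [Matrix.coeff_det_one_add_X_smul_eq_sum_minors]
  simp only [Matrix.trace, Matrix.diag, altPow, Matrix.of_apply]
  rw [← Finset.mul_sum]
  have hn : (n.factorial : ℂ) ≠ 0 := by exact_mod_cast n.factorial_ne_zero
  rw [inv_mul_eq_iff_eq_mul₀ hn]
  -- words with a repeated letter contribute nothing
  have h1 : ∑ u : Fin n → X, (M.submatrix u u).det =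
      ∑ u : Fin n → X with Function.Injective u, (M.submatrix u u).det := by
    rw [Finset.sum_filter]
    refine Finset.sum_congr rfl fun u _ => ?_
    split_ifs with h
    · rfl
    · simp only [Function.Injective] at h
      push Not at h
      obtain ⟨i, j, hij, hne⟩ := h
      exact Matrix.det_zero_of_row_eq hne (by ext l; simp [hij])
  rw [h1]
  have hmaps : ∀ u ∈ (Finset.univ.filter fun u : Fin n → X => Function.Injective u),
      Finset.univ.image u ∈ (Finset.univ : Finset X).powersetCard n := by
    intro u hu
    rw [Finset.mem_powersetCard]
    refine ⟨Finset.subset_univ _, ?_⟩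
    rw [Finset.card_image_of_injective _ (Finset.mem_filter.1 hu).2]; simp
  rw [← Finset.sum_fiberwise_of_maps_to hmaps, Finset.mul_sum]
  refine Finset.sum_congr rfl fun s hs => ?_
  have hcard : s.card = n := (Finset.mem_powersetCard.1 hs).2
  have hcard' : Fintype.card (Fin n) = Fintype.card s := by simp [hcard]
  let e₀ : Fin n ≃ s := Fintype.equivOfCardEq hcard'
  -- the words with image `s` are the bijections from `Fin n` onto `s`
  have h2 : ∑ u ∈ Finset.univ.filter (fun u : Fin n → X => Function.Injective u) with
        Finset.univ.image u = s, (M.submatrix u u).det =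
      ∑ e : Fin n ≃ s, (M.submatrix (Subtype.val : s → X) (Subtype.val : s → X)).det := by
    symm
    refine Finset.sum_bij (fun e _ i => (e i : X)) ?_ ?_ ?_ ?_
    · intro e _
      simp only [Finset.mem_filter, Finset.mem_univ, true_and]
      refine ⟨fun i j h => e.injective (Subtype.ext h), ?_⟩
      ext x
      simp only [Finset.mem_image, Finset.mem_univ, true_and]
      constructor
      · rintro ⟨i, rfl⟩; exact (e i).2
      · intro hx; exact ⟨e.symm ⟨x, hx⟩, by simp⟩
    · intro e _ e' _ h
      ext i; exact congrFun h i
    · intro u hu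
      simp only [Finset.mem_filter, Finset.mem_univ, true_and] at hu
      have hmem : ∀ i, u i ∈ s := fun i => by
        rw [← hu.2]; exact Finset.mem_image_of_mem _ (Finset.mem_univ _)
      refine ⟨Equiv.ofBijective (fun i => ⟨u i, hmem i⟩) ?_, Finset.mem_univ _, rfl⟩
      rw [Fintype.bijective_iff_injective_and_card]
      exact ⟨fun i j h => hu.1 (congrArg Subtype.val h), hcard'⟩
    · intro e _
      exact (Matrix.det_submatrix_equiv_self e
        (M.submatrix (Subtype.val : s → X) (Subtype.val : s → X))).symm
  rw [h2, Finset.sum_const, Finset.card_univ, Fintype.card_equiv e₀, Fintype.card_fin,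
    nsmul_eq_mul]

end Algebra

/-! ### The commutant of the unitary group on tensor powers -/

section FFT

variable {ℓ n : ℕ}

/-- Zariski density of `U(ℓ)` in the matrix algebra: first torus variables are freed, which reaches
all `U D V` with `D` diagonal and hence all Hermitian matrices; then the real parameter in
`H₁ + t H₂` is freed. -/
lemma mvPolynomial_eq_zero_of_unitary (p : MvPolynomial (Fin ℓ × Fin ℓ) ℂ)
    (h : ∀ U ∈ Matrix.unitaryGroup (Fin ℓ) ℂ, MvPolynomial.eval (fun x => U x.1 x.2) p = 0) :
    p = 0 := by
  have h1 : ∀ U ∈ Matrix.unitaryGroup (Fin ℓ) ℂ, ∀ V ∈ Matrix.unitaryGroup (Fin ℓ) ℂ,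
      ∀ z : Fin ℓ → ℂ,
      MvPolynomial.eval (fun x => (U * Matrix.diagonal z * V) x.1 x.2) p = 0 := by
    intro U hU V hV z
    let q : MvPolynomial (Fin ℓ) ℂ := MvPolynomial.bind₁ (fun x : Fin ℓ × Fin ℓ =>
      ∑ m, MvPolynomial.C (U x.1 m) * MvPolynomial.X m * MvPolynomial.C (V m x.2)) p
    have hq : ∀ z : Fin ℓ → ℂ, MvPolynomial.eval z q =
        MvPolynomial.eval (fun x => (U * Matrix.diagonal z * V) x.1 x.2) p := by
      intro z
      simp only [q]
      rw [← MvPolynomial.coe_aeval_eq_eval, RingHom.coe_coe, MvPolynomial.aeval_bind₁,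
        ← MvPolynomial.coe_aeval_eq_eval, RingHom.coe_coe]
      congr 2
      ext x
      simp [Matrix.mul_apply, Matrix.diagonal_apply]
    have hq0 : q = 0 := by
      refine MvPolynomial.funext_set (fun _ => Metric.sphere (0 : ℂ) 1) (fun _ => ?_) ?_
      · refine (isPreconnected_sphere (by simp [Complex.rank_real_complex]) 0 1
          ).infinite_of_nontrivial ⟨1, by simp, -1, by simp, ?_⟩
        norm_num [Complex.ext_iff]
      · intro z hz
        rw [hq, map_zero]
        refine h _ (mul_mem (mul_mem hU ?_) hV)
        rw [Matrix.mem_unitaryGroup_iff, Matrix.star_eq_conjTranspose,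
          Matrix.diagonal_conjTranspose, Matrix.diagonal_mul_diagonal, ← Matrix.diagonal_one]
        congr 1
        ext i
        have : ‖z i‖ = 1 := by simpa using hz i (Set.mem_univ i)
        simp [Complex.mul_conj, Complex.normSq_eq_norm_sq, this]
    rw [← hq, hq0, map_zero]
  have h2 : ∀ H : Matrix (Fin ℓ) (Fin ℓ) ℂ, H.IsHermitian →
      MvPolynomial.eval (fun x => H x.1 x.2) p = 0 := by
    intro H hH
    rw [hH.spectral_theorem, Unitary.conjStarAlgAut_apply]
    exact h1 _ hH.eigenvectorUnitary.2 _ (star hH.eigenvectorUnitary).2 _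
  refine MvPolynomial.funext fun x => ?_
  rw [map_zero]
  let Y : Matrix (Fin ℓ) (Fin ℓ) ℂ := Matrix.of fun i j => x (i, j)
  let H₁ : Matrix (Fin ℓ) (Fin ℓ) ℂ := (realPart Y : Matrix (Fin ℓ) (Fin ℓ) ℂ)
  let H₂ : Matrix (Fin ℓ) (Fin ℓ) ℂ := (imaginaryPart Y : Matrix (Fin ℓ) (Fin ℓ) ℂ)
  have hY : H₁ + Complex.I • H₂ = Y := realPart_add_I_smul_imaginaryPart Y
  let q : Polynomial ℂ := MvPolynomial.aeval (fun x : Fin ℓ × Fin ℓ =>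
    Polynomial.C (H₁ x.1 x.2) + Polynomial.X * Polynomial.C (H₂ x.1 x.2)) p
  have hq : ∀ z : ℂ, q.eval z =
      MvPolynomial.eval (fun x => (H₁ + z • H₂) x.1 x.2) p := by
    intro z
    simp only [q]
    rw [← Polynomial.coe_evalRingHom, MvPolynomial.aeval_def, MvPolynomial.hom_eval₂,
      MvPolynomial.eval, MvPolynomial.coe_eval₂Hom]
    congr 1
    · ext; simp
    · ext x; simp; ring
  have hq0 : q = 0 := by
    refine Polynomial.eq_zero_of_infinite_isRoot q ?_
    refine (Set.infinite_range_of_injective Complex.ofReal_injective).mono ?_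
    rintro _ ⟨t, rfl⟩
    rw [Set.mem_ofPred_eq, Polynomial.IsRoot, hq]
    refine h2 _ ?_
    have e1 : H₁ᴴ = H₁ := (realPart Y).2
    have e2 : H₂ᴴ = H₂ := (imaginaryPart Y).2
    rw [Matrix.IsHermitian, Matrix.conjTranspose_add, Matrix.conjTranspose_smul, e1, e2]
    simp
  have := hq Complex.I
  rw [hq0, Polynomial.eval_zero, hY] at this
  exact this.symm

/-- Two families with the same letter counts differ by a permutation of the positions. -/
lemma exists_perm_of_card_fiber_eq {X : Type*} [DecidableEq X] (u v : Fin n → X)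
    (h : ∀ y, Fintype.card {i // u i = y} = Fintype.card {i // v i = y}) :
    ∃ π : Equiv.Perm (Fin n), v ∘ π = u := by
  let e : ∀ y, {i // u i = y} ≃ {i // v i = y} := fun y => Fintype.equivOfCardEq (h y)
  refine ⟨(Equiv.sigmaFiberEquiv u).symm.trans
    ((Equiv.sigmaCongrRight e).trans (Equiv.sigmaFiberEquiv v)), ?_⟩
  ext i
  exact (e (u i) ⟨i, rfl⟩).2

/-- A linear functional that kills `U^{⊗n}` for all unitary `U` kills all tensors invariant under
the simultaneous permutation of positions. -/
lemma functional_vanishes_on_symmetric (φ f : (Fin n → Fin ℓ) → (Fin n → Fin ℓ) → ℂ)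
    (h : ∀ U ∈ Matrix.unitaryGroup (Fin ℓ) ℂ, ∑ a, ∑ b, φ a b * tensorPow n U a b = 0)
    (hf : ∀ (π : Equiv.Perm (Fin n)) a b, f (a ∘ π) (b ∘ π) = f a b) :
    ∑ a, ∑ b, φ a b * f a b = 0 := by
  let s : (Fin n → Fin ℓ) × (Fin n → Fin ℓ) → (Fin ℓ × Fin ℓ →₀ ℕ) := fun c =>
    ∑ i, Finsupp.single (c.1 i, c.2 i) 1
  let P : MvPolynomial (Fin ℓ × Fin ℓ) ℂ := ∑ c, MvPolynomial.monomial (s c) (φ c.1 c.2)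
  have hP : P = 0 := by
    refine mvPolynomial_eq_zero_of_unitary P fun U hU => ?_
    rw [← h U hU, ← Fintype.sum_prod_type', map_sum]
    refine Finset.sum_congr rfl fun c _ => ?_
    have : MvPolynomial.monomial (s c) (φ c.1 c.2) =
        MvPolynomial.C (φ c.1 c.2) * ∏ i, MvPolynomial.X (c.1 i, c.2 i) := by
      simp only [s, MvPolynomial.X]
      rw [← MvPolynomial.monomial_sum_one, MvPolynomial.C_mul_monomial, mul_one]
    rw [this]
    simp [tensorPow]
  have hcoeff : ∀ m, ∑ c with s c = m, φ c.1 c.2 = 0 := by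
    intro m
    have := congrArg (MvPolynomial.coeff m) hP
    simpa [P, MvPolynomial.coeff_sum, MvPolynomial.coeff_monomial, Finset.sum_filter] using this
  have hs : ∀ c d, s c = s d → f c.1 c.2 = f d.1 d.2 := by
    intro c d hcd
    obtain ⟨π, hπ⟩ := exists_perm_of_card_fiber_eq (fun i => (c.1 i, c.2 i))
      (fun i => (d.1 i, d.2 i)) (fun y => by
        have := DFunLike.congr_fun hcd y
        simp only [s, Finsupp.coe_finsetSum, Finset.sum_apply, Finsupp.single_apply,
          Finset.sum_boole, Nat.cast_id] at this
        rw [Fintype.card_subtype, Fintype.card_subtype, this])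
    have e1 : c.1 = d.1 ∘ π := by
      ext i; exact congrArg Fin.val (congrArg Prod.fst (congrFun hπ i)).symm
    have e2 : c.2 = d.2 ∘ π := by
      ext i; exact congrArg Fin.val (congrArg Prod.snd (congrFun hπ i)).symm
    rw [e1, e2, hf]
  rw [← Fintype.sum_prod_type' (fun a b => φ a b * f a b),
    ← Finset.sum_fiberwise_of_maps_to (s := Finset.univ) (t := Finset.univ.image s) (g := s)
      (fun c _ => Finset.mem_image_of_mem _ (Finset.mem_univ _))]
  refine Finset.sum_eq_zero fun m hm => ?_
  obtain ⟨d, -, rfl⟩ := Finset.mem_image.1 hm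
  rw [Finset.sum_congr rfl (g := fun c => φ c.1 c.2 * f d.1 d.2) fun c hc => by
    rw [hs c d (Finset.mem_filter.1 hc).2], ← Finset.sum_mul, hcoeff, zero_mul]

lemma commute_symmetric_of_commute_unitary
    (T : Matrix (Fin n → Fin ℓ) (Fin n → Fin ℓ) ℂ)
    (h : ∀ U ∈ Matrix.unitaryGroup (Fin ℓ) ℂ, T * tensorPow n U = tensorPow n U * T)
    (Y : Matrix (Fin n → Fin ℓ) (Fin n → Fin ℓ) ℂ)
    (hY : ∀ (π : Equiv.Perm (Fin n)) a b, Y (a ∘ π) (b ∘ π) = Y a b) : T * Y = Y * T := by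
  have key : ∀ (c d : Fin n → Fin ℓ) (Z : Matrix (Fin n → Fin ℓ) (Fin n → Fin ℓ) ℂ),
      ∑ a, ∑ b, ((if b = d then T c a else 0) - (if a = c then T b d else 0)) * Z a b =
        (T * Z) c d - (Z * T) c d := by
    intro c d Z
    simp only [sub_mul, Finset.sum_sub_distrib, Matrix.mul_apply, ite_mul, zero_mul,
      Finset.sum_ite_eq', Finset.mem_univ, if_true]
    congr 1
    rw [Finset.sum_comm]
    simp only [Finset.sum_ite_eq', Finset.mem_univ, if_true, mul_comm]
  ext c d
  rw [← sub_eq_zero, ← key]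
  refine functional_vanishes_on_symmetric _ Y (fun U hU => ?_) hY
  rw [key, h U hU, sub_self]

/-- The matrix permuting the positions of words. -/
def permMat (ℓ : ℕ) {n : ℕ} (σ : Equiv.Perm (Fin n)) :
    Matrix (Fin n → Fin ℓ) (Fin n → Fin ℓ) ℂ :=
  Matrix.of fun a b => if a ∘ σ = b then 1 else 0

lemma permMat_mul (σ : Equiv.Perm (Fin n)) (Y : Matrix (Fin n → Fin ℓ) (Fin n → Fin ℓ) ℂ)
    (a b : Fin n → Fin ℓ) : (permMat ℓ σ * Y) a b = Y (a ∘ σ) b := by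
  simp [permMat, Matrix.mul_apply]

lemma permMat_comp (σ τ : Equiv.Perm (Fin n)) :
    permMat ℓ σ * permMat ℓ τ = permMat ℓ (σ * τ) := by
  ext a b
  rw [permMat_mul]; rfl

/-- A matrix commuting with all `U^{⊗n}` is a linear combination of position permutations. The proof
is the double commutant argument: a linear projection `p` onto the span of the permutations is
averaged to an equivariant one, whose matrix coefficients are permutation invariant and hence
commute with `T`, so that `T = T p(1) = p(T)` lies in the span. -/
lemma exists_perm_combination
    (T : Matrix (Fin n → Fin ℓ) (Fin n → Fin ℓ) ℂ)
    (h : ∀ U ∈ Matrix.unitaryGroup (Fin ℓ) ℂ, T * tensorPow n U = tensorPow n U * T) :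
    ∃ c : Equiv.Perm (Fin n) → ℂ, T = ∑ σ, c σ • permMat ℓ σ := by
  have hmem : T ∈ Submodule.span ℂ (Set.range (permMat ℓ : Equiv.Perm (Fin n) → _)) := by
    set B := Submodule.span ℂ (Set.range (permMat ℓ : Equiv.Perm (Fin n) → _)) with hB
    have hPB : ∀ σ, permMat ℓ σ ∈ B := fun σ => Submodule.subset_span ⟨σ, rfl⟩
    have hPBmul : ∀ σ, ∀ Z ∈ B, permMat ℓ σ * Z ∈ B := by
      intro σ Z hZ
      induction hZ using Submodule.span_induction with
      | mem x hx => obtain ⟨τ, rfl⟩ := hx; rw [permMat_comp]; exact hPB _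
      | zero => simp
      | add x y _ _ hx hy => rw [mul_add]; exact add_mem hx hy
      | smul r x _ hx => rw [Matrix.mul_smul]; exact B.smul_mem _ hx
    obtain ⟨p, hp⟩ := B.subtype.exists_leftInverse_of_injective B.ker_subtype
    let pt : Matrix (Fin n → Fin ℓ) (Fin n → Fin ℓ) ℂ →ₗ[ℂ]
        Matrix (Fin n → Fin ℓ) (Fin n → Fin ℓ) ℂ :=
      ∑ σ : Equiv.Perm (Fin n), (LinearMap.mulLeft ℂ (permMat ℓ σ)) ∘ₗ B.subtype ∘ₗ p ∘ₗ
        (LinearMap.mulLeft ℂ (permMat ℓ σ⁻¹))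
    have hpt : ∀ Z, pt Z = ∑ σ, permMat ℓ σ * (p (permMat ℓ σ⁻¹ * Z) : Matrix _ _ ℂ) := by
      intro Z; simp [pt, LinearMap.sum_apply]
    have hptB : ∀ Z, pt Z ∈ B := fun Z => by
      rw [hpt]; exact Submodule.sum_mem _ fun σ _ => hPBmul σ _ (p _).2
    have hone : (permMat ℓ (1 : Equiv.Perm (Fin n))) = 1 := by
      ext a b; simp [permMat, Matrix.one_apply]
    have hpt1 : pt 1 = (n.factorial : ℂ) • 1 := by
      rw [hpt, Finset.sum_congr rfl (g := fun _ => (1 : Matrix _ _ ℂ))]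
      · simp [Fintype.card_perm, Nat.cast_smul_eq_nsmul]
      · intro σ _
        have := LinearMap.congr_fun hp ⟨permMat ℓ σ⁻¹, hPB _⟩
        simp only [LinearMap.comp_apply, Submodule.subtype_apply, LinearMap.id_apply] at this
        rw [mul_one, this]
        simp only
        rw [permMat_comp, mul_inv_cancel, hone]
    have hequi : ∀ τ Z, pt (permMat ℓ τ * Z) = permMat ℓ τ * pt Z := by
      intro τ Z
      rw [hpt, hpt, Finset.mul_sum, ← Equiv.sum_comp (Equiv.mulLeft τ)]
      refine Finset.sum_congr rfl fun σ _ => ?_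
      simp only [Equiv.coe_mulLeft]
      rw [← mul_assoc, ← mul_assoc, permMat_comp, permMat_comp, _root_.mul_inv_rev,
        inv_mul_cancel_right]
    have hfin : pt T = T * pt 1 := by
      ext a e
      let Y : (Fin n → Fin ℓ) → Matrix (Fin n → Fin ℓ) (Fin n → Fin ℓ) ℂ := fun d =>
        Matrix.of fun a c => pt (Matrix.single c d 1) a e
      have hY : ∀ d (π : Equiv.Perm (Fin n)) a b, Y d (a ∘ π) (b ∘ π) = Y d a b := by
        intro d π a b
        have h1 : permMat ℓ π * Matrix.single (b ∘ π) d 1 = Matrix.single b d (1 : ℂ) := by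
          ext x y
          rw [permMat_mul]
          simp [Matrix.single_apply, π.surjective.injective_comp_right.eq_iff]
        simp only [Y, Matrix.of_apply]
        rw [← h1, hequi, permMat_mul]
      have hcomm : ∀ d, T * Y d = Y d * T := fun d =>
        commute_symmetric_of_commute_unitary T h _ (hY d)
      have hT : T = ∑ d, ∑ c, T c d • Matrix.single c d (1 : ℂ) := by
        conv_lhs => rw [Matrix.matrix_eq_sum_single T]
        rw [Finset.sum_comm]
        simp [Matrix.smul_single]
      have h1' : (1 : Matrix (Fin n → Fin ℓ) (Fin n → Fin ℓ) ℂ) = ∑ d, Matrix.single d d 1 := by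
        conv_lhs => rw [Matrix.matrix_eq_sum_single 1]
        simp [Matrix.one_apply, Finset.sum_ite_eq, apply_ite]
      calc pt T a e = ∑ d, (Y d * T) a d := by
            conv_lhs => rw [hT]
            simp only [map_sum, map_smul, Matrix.sum_apply, Matrix.smul_apply, Matrix.mul_apply, Y,
              Matrix.of_apply, smul_eq_mul, mul_comm]
        _ = ∑ d, (T * Y d) a d := by simp only [hcomm]
        _ = (T * pt 1) a e := by
            rw [h1']
            simp only [map_sum, Matrix.sum_apply, Matrix.mul_apply, Y, Matrix.of_apply,
              Finset.mul_sum]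
            rw [Finset.sum_comm]
    have hn : (n.factorial : ℂ) ≠ 0 := by exact_mod_cast n.factorial_ne_zero
    have : T = (n.factorial : ℂ)⁻¹ • pt T := by
      rw [hfin, hpt1, Matrix.mul_smul, mul_one, smul_smul, inv_mul_cancel₀ hn, one_smul]
    rw [this]
    exact B.smul_mem _ (hptB T)
  obtain ⟨c, hc⟩ := (Submodule.mem_span_range_iff_exists_fun ℂ).1 hmem
  exact ⟨c, hc.symm⟩

end FFT

/-! ### Words and the vectors attached to them -/

section Words

variable {ℓ k n : ℕ}

/-- `wordLis` is at most `ℓ` precisely if every set of positions on which the word is weakly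
increasing has at most `ℓ` elements. -/
lemma wordLis_le_iff (w : Fin n → Fin k) :
    wordLis k n w ≤ ℓ ↔ ∀ A : Finset (Fin n), MonotoneOn w A → A.card ≤ ℓ := by
  have hbdd : BddAbove {m : ℕ | ∃ s : Fin m → Fin n, StrictMono s ∧ Monotone (w ∘ s)} := by
    refine ⟨n, ?_⟩
    rintro m ⟨s, hs, -⟩
    simpa using Fintype.card_le_of_injective s hs.injective
  constructor
  · intro h A hA
    refine le_trans (le_csSup hbdd ?_) h
    refine ⟨A.orderEmbOfFin rfl, (A.orderEmbOfFin rfl).strictMono, fun i j hij => ?_⟩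
    exact hA (A.orderEmbOfFin_mem rfl i) (A.orderEmbOfFin_mem rfl j)
      ((A.orderEmbOfFin rfl).monotone hij)
  · intro h
    refine csSup_le ⟨0, Fin.elim0, fun i => i.elim0, fun i => i.elim0⟩ ?_
    rintro m ⟨s, hs, hm⟩
    have := h (Finset.univ.image s) (by
      intro x hx y hy hxy
      simp only [Finset.coe_image, Finset.coe_univ, Set.image_univ, Set.mem_range] at hx hy
      obtain ⟨i, rfl⟩ := hx
      obtain ⟨j, rfl⟩ := hy
      exact hm (hs.le_iff_le.1 hxy))
    rwa [Finset.card_image_of_injective _ hs.injective, Finset.card_univ, Fintype.card_fin] at this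

/-- The coordinates of the equivariant map
`v₁ ⊗ ⋯ ⊗ vₙ ↦ (v₁ ⊗ e_{w 1}) ∧ ⋯ ∧ (vₙ ⊗ e_{w n})` from `V^{⊗n}` to `Λⁿ(V ⊗ ℂᵏ)`, where
`V = ℂ^ℓ`. -/
def wordVec (ℓ : ℕ) {k n : ℕ} (w : Fin n → Fin k) :
    (Fin n → Fin ℓ × Fin k) × (Fin n → Fin ℓ) → ℂ := fun p =>
  ((1 : Matrix (Fin ℓ × Fin k) (Fin ℓ × Fin k) ℂ).submatrix p.1 (fun j => (p.2 j, w j))).det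

lemma exists_perm_of_wordVec_ne_zero (w : Fin n → Fin k)
    (p : (Fin n → Fin ℓ × Fin k) × (Fin n → Fin ℓ)) (h : wordVec ℓ w p ≠ 0) :
    ∃ π : Equiv.Perm (Fin n), ∀ j, p.1 (π j) = (p.2 j, w j) := by
  rw [wordVec, Matrix.det_apply'] at h
  obtain ⟨π, -, hπ⟩ := Finset.exists_ne_zero_of_sum_ne_zero h
  refine ⟨π, fun j => ?_⟩
  have := Finset.prod_ne_zero_iff.1 (right_ne_zero_of_mul hπ) j (Finset.mem_univ j)
  by_contra hne
  exact this (by simp [hne])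

/-- Greedy colouring: a word whose weakly increasing subsequences have length at most `ℓ` can be
coloured with `ℓ` colours, the colour of a position being the maximal length of a weakly increasing
subsequence that precedes it and can be continued by it. -/
lemma exists_colouring (w : Fin n → Fin k)
    (hw : ∀ A : Finset (Fin n), MonotoneOn w A → A.card ≤ ℓ) :
    ∃ c : Fin n → Fin ℓ, ∀ i j, i < j → w i ≤ w j → c i < c j := by
  classical
  let S : Fin n → Finset (Finset (Fin n)) := fun i =>
    Finset.univ.filter fun A => MonotoneOn w A ∧ ∀ j ∈ A, j < i ∧ w j ≤ w i
  -- adjoining `i` to an admissible set at `i`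
  have hins : ∀ i, ∀ A ∈ S i, MonotoneOn w (insert i A : Finset (Fin n)) ∧ i ∉ A := by
    intro i A hA
    simp only [S, Finset.mem_filter, Finset.mem_univ, true_and] at hA
    refine ⟨?_, fun hi => lt_irrefl _ (hA.2 i hi).1⟩
    intro x hx y hy hxy
    simp only [Finset.coe_insert, Set.mem_insert_iff, Finset.mem_coe] at hx hy
    rcases hx with rfl | hx <;> rcases hy with rfl | hy
    · exact le_rfl
    · exact absurd (hA.2 y hy).1 (not_lt.2 hxy)
    · exact (hA.2 x hx).2
    · exact hA.1 hx hy hxy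
  let c : Fin n → ℕ := fun i => (S i).sup Finset.card
  have hne : ∀ i, (S i).Nonempty := fun i => ⟨∅, by simp [S, MonotoneOn]⟩
  have hatt : ∀ i, ∃ A ∈ S i, c i = A.card := fun i => Finset.exists_mem_eq_sup _ (hne i) _
  have hlt : ∀ i, c i < ℓ := by
    intro i
    obtain ⟨A, hA, hc⟩ := hatt i
    have := hw _ (hins i A hA).1
    rw [Finset.card_insert_of_notMem (hins i A hA).2] at this
    omega
  refine ⟨fun i => ⟨c i, hlt i⟩, fun i j hij hwij => ?_⟩
  obtain ⟨A, hA, hc⟩ := hatt i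
  have hmem : insert i A ∈ S j := by
    have h1 := (hins i A hA).1
    simp only [S, Finset.mem_filter, Finset.mem_univ, true_and] at hA ⊢
    refine ⟨h1, fun x hx => ?_⟩
    rcases Finset.mem_insert.1 hx with rfl | hx
    · exact ⟨hij, hwij⟩
    · exact ⟨(hA.2 x hx).1.trans hij, (hA.2 x hx).2.trans hwij⟩
  have := Finset.le_sup (f := Finset.card) hmem
  rw [Finset.card_insert_of_notMem (hins i A hA).2] at this
  change c i < c j
  change A.card + 1 ≤ c j at this
  omega

/-- Rearranging a word inside the classes of such a colouring never makes it lexicographically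
larger, because the word is strictly decreasing on each class. -/
lemma toLex_rearrange_le (w : Fin n → Fin k) (c : Fin n → Fin ℓ)
    (hc : ∀ i j, i < j → w i ≤ w j → c i < c j) (π : Equiv.Perm (Fin n)) (hπ : c ∘ π = c) :
    toLex (w ∘ π) ≤ toLex w := by
  by_contra hlt
  rw [not_le] at hlt
  obtain ⟨i, hi, hwi⟩ := hlt
  have hcol : ∀ j, c (π j) = c j := congrFun hπ
  have hfix : ∀ j, j < i → π j = j := by
    intro j hj
    have h1 : w j = w (π j) := hi j hj
    rcases lt_trichotomy (π j) j with h | h | h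
    · exact absurd (hcol j) (hc _ _ h h1.ge).ne
    · exact h
    · exact absurd (hcol j) (hc _ _ h h1.le).ne'
  have hwi' : w i < w (π i) := hwi
  rcases lt_trichotomy (π i) i with h | h | h
  · exact h.ne (π.injective (hfix _ h))
  · rw [h] at hwi'; exact lt_irrefl _ hwi'
  · exact absurd (hcol i) (hc _ _ h hwi'.le).ne'

lemma linearIndependent_wordVec :
    LinearIndependent ℂ (fun w : {w : Fin n → Fin k // wordLis k n w ≤ ℓ} =>
      wordVec ℓ (w : Fin n → Fin k)) := by
  classical
  rw [Fintype.linearIndependent_iff]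
  intro g hg
  -- the coefficients vanish one after the other in lexicographic order
  have main : ∀ (x : Lex (Fin n → Fin k)) (hx : wordLis k n (ofLex x) ≤ ℓ),
      g ⟨ofLex x, hx⟩ = 0 := by
    intro x
    induction x using WellFoundedLT.induction with
    | ind x ih =>
      intro hx
      obtain ⟨c, hc⟩ := exists_colouring (ofLex x) ((wordLis_le_iff _).1 hx)
      have h0 := congrFun hg (fun i => (c i, ofLex x i), c)
      rw [Finset.sum_apply, Finset.sum_eq_single ⟨ofLex x, hx⟩] at h0
      · have hinj : Function.Injective (fun i => (c i, ofLex x i)) := by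
          intro i j hij
          simp only [Prod.mk.injEq] at hij
          rcases lt_trichotomy i j with h | h | h
          · exact absurd hij.1 (hc _ _ h hij.2.le).ne
          · exact h
          · exact absurd hij.1 (hc _ _ h hij.2.ge).ne'
        have h1 : wordVec ℓ (ofLex x) (fun i => (c i, ofLex x i), c) = 1 := by
          simp only [wordVec]
          rw [Matrix.submatrix_one _ hinj, Matrix.det_one]
        rwa [Pi.smul_apply, h1, smul_eq_mul, mul_one] at h0
      · rintro ⟨v, hv⟩ - hne
        simp only [Pi.smul_apply, smul_eq_mul]
        by_cases hz : wordVec ℓ v (fun i => (c i, ofLex x i), c) = 0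
        · rw [hz, mul_zero]
        · obtain ⟨π, hπ⟩ := exists_perm_of_wordVec_ne_zero _ _ hz
          simp only [Prod.mk.injEq] at hπ
          have hvx : ofLex x ∘ π = v := funext fun j => (hπ j).2
          have hle := toLex_rearrange_le (ofLex x) c hc π (funext fun j => (hπ j).1)
          rw [hvx] at hle
          have hlt : toLex v < x := lt_of_le_of_ne hle fun h => hne (Subtype.ext h)
          have := ih (toLex v) hlt hv
          rw [show g ⟨v, hv⟩ = 0 from this, zero_mul]
      · intro h; exact absurd (Finset.mem_univ _) h
  rintro ⟨w, hw⟩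
  exact main (toLex w) hw

/-- Permutations of the positions that move only elements of `A`. -/
def permsOn (A : Finset (Fin n)) : Finset (Equiv.Perm (Fin n)) :=
  Finset.univ.filter fun π => ∀ i, i ∉ A → π i = i

/-- Antisymmetrising over more than `ℓ` positions annihilates `(ℂ^ℓ)^{⊗n}`. -/
lemma sum_wordVec_perm (w : Fin n → Fin k) (A : Finset (Fin n)) (hA : ℓ < A.card) :
    ∑ π ∈ permsOn A, wordVec ℓ (w ∘ π) = 0 := by
  ext p
  obtain ⟨u, b⟩ := p
  rw [Finset.sum_apply, Pi.zero_apply]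
  obtain ⟨i, hi, j, hj, hij, hb⟩ := Finset.exists_ne_map_eq_of_card_lt_of_maps_to
    (s := A) (t := (Finset.univ : Finset (Fin ℓ))) (by simpa using hA) (f := b)
    (fun _ _ => Finset.mem_univ _)
  have hbswap : ∀ x, b (Equiv.swap i j x) = b x := by
    intro x
    rw [Equiv.swap_apply_def]
    split_ifs with h1 h2
    · rw [h1, hb]
    · rw [h2, hb]
    · rfl
  have hneg : ∀ π : Equiv.Perm (Fin n), wordVec ℓ (w ∘ (π * Equiv.swap i j : Equiv.Perm (Fin n)))
      (u, b) = - wordVec ℓ (w ∘ π) (u, b) := by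
    intro π
    have hM : (1 : Matrix (Fin ℓ × Fin k) (Fin ℓ × Fin k) ℂ).submatrix u
        (fun x => (b x, (w ∘ (π * Equiv.swap i j : Equiv.Perm (Fin n))) x)) =
        ((1 : Matrix (Fin ℓ × Fin k) (Fin ℓ × Fin k) ℂ).submatrix u
        (fun x => (b x, (w ∘ π) x))).submatrix id (Equiv.swap i j) := by
      ext x y
      simp only [Matrix.submatrix_apply, Function.comp, Equiv.Perm.mul_apply, id]
      rw [hbswap]
    simp only [wordVec]
    rw [hM, Matrix.det_permute', Equiv.Perm.sign_swap hij]
    simp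
  have hfix : ∀ x, x ∉ A → Equiv.swap i j x = x := fun x hx =>
    Equiv.swap_apply_of_ne_of_ne (fun h => hx (h ▸ hi)) (fun h => hx (h ▸ hj))
  have hmem : ∀ π ∈ permsOn A, π * Equiv.swap i j ∈ permsOn A := by
    intro π hπ
    simp only [permsOn, Finset.mem_filter, Finset.mem_univ, true_and] at hπ ⊢
    intro x hx
    rw [Equiv.Perm.mul_apply, hfix x hx, hπ x hx]
  refine Finset.sum_involution (fun π _ => π * Equiv.swap i j) ?_ ?_ hmem ?_
  · intro π _
    rw [hneg, add_neg_cancel]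
  · intro π _ _ h
    have := mul_eq_left.1 h
    exact hij (Equiv.swap_eq_one_iff.1 this)
  · intro π _
    rw [mul_assoc, Equiv.swap_mul_self, mul_one]

/-- A word weakly increasing on `A` is lexicographically minimal among its rearrangements on `A`. -/
lemma toLex_le_rearrange (w : Fin n → Fin k) (A : Finset (Fin n)) (hA : MonotoneOn w A)
    (π : Equiv.Perm (Fin n)) (hπ : π ∈ permsOn A) : toLex w ≤ toLex (w ∘ π) := by
  classical
  simp only [permsOn, Finset.mem_filter, Finset.mem_univ, true_and] at hπ
  by_contra hlt
  rw [not_le] at hlt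
  obtain ⟨i, hi, hwi⟩ := hlt
  have hwi' : w (π i) < w i := hwi
  have hpA : ∀ j ∈ A, π j ∈ A := by
    intro j hj
    by_contra h
    have := π.injective (hπ _ h)
    rw [this] at h
    exact h hj
  have hiA : i ∈ A := by
    by_contra h
    rw [hπ i h] at hwi'; exact lt_irrefl _ hwi'
  -- the positions in `A` with letters below `w i` precede `i`, so `π` maps them to themselves
  let B := A.filter fun j => w j < w i
  have hB : ∀ j ∈ B, π j ∈ B := by
    intro j hj
    obtain ⟨hjA, hjw⟩ := Finset.mem_filter.1 hj
    have hji : j < i := by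
      by_contra h
      exact absurd (hA hiA hjA (not_lt.1 h)) (not_le.2 hjw)
    have h1 : w (π j) = w j := hi j hji
    exact Finset.mem_filter.2 ⟨hpA j hjA, h1 ▸ hjw⟩
  have himg : B.image π = B := by
    refine Finset.eq_of_subset_of_card_le (Finset.image_subset_iff.2 hB) ?_
    rw [Finset.card_image_of_injective _ π.injective]
  have hpiB : π i ∈ B.image π := by
    rw [himg]; exact Finset.mem_filter.2 ⟨hpA i hiA, hwi'⟩
  obtain ⟨j, hj, hji⟩ := Finset.mem_image.1 hpiB
  rw [π.injective hji] at hj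
  exact lt_irrefl _ (Finset.mem_filter.1 hj).2

/-- The straightening argument: in the relation `sum_wordVec_perm` for a weakly increasing
subsequence of length greater than `ℓ`, every word other than `w` is lexicographically larger. -/
lemma wordVec_mem_span (w : Fin n → Fin k) :
    wordVec ℓ w ∈ Submodule.span ℂ (Set.range
      (fun w : {w : Fin n → Fin k // wordLis k n w ≤ ℓ} => wordVec ℓ (w : Fin n → Fin k))) := by
  classical
  set V := Submodule.span ℂ (Set.range
      (fun w : {w : Fin n → Fin k // wordLis k n w ≤ ℓ} => wordVec ℓ (w : Fin n → Fin k)))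
  have main : ∀ x : Lex (Fin n → Fin k), wordVec ℓ (ofLex x) ∈ V := by
    intro x
    induction x using WellFoundedGT.induction with
    | ind x ih =>
      by_cases hx : wordLis k n (ofLex x) ≤ ℓ
      · exact Submodule.subset_span ⟨⟨ofLex x, hx⟩, rfl⟩
      · rw [wordLis_le_iff] at hx
        push Not at hx
        obtain ⟨A, hA, hcard⟩ := hx
        have hsum := sum_wordVec_perm (ofLex x) A hcard
        rw [← Finset.sum_filter_add_sum_filter_not _
          (fun π : Equiv.Perm (Fin n) => ofLex x ∘ π = ofLex x)] at hsum
        have h1 : ∑ π ∈ (permsOn A).filter (fun π : Equiv.Perm (Fin n) => ofLex x ∘ π = ofLex x),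
            wordVec ℓ (ofLex x ∘ π) =
            (((permsOn A).filter fun π : Equiv.Perm (Fin n) => ofLex x ∘ π = ofLex x).card : ℂ) •
              wordVec ℓ (ofLex x) := by
          rw [Finset.sum_congr rfl (g := fun _ => wordVec ℓ (ofLex x)) fun π hπ => by
            rw [(Finset.mem_filter.1 hπ).2], Finset.sum_const, Nat.cast_smul_eq_nsmul]
        have h2 : ∑ π ∈ (permsOn A).filter (fun π : Equiv.Perm (Fin n) => ¬ ofLex x ∘ π = ofLex x),
            wordVec ℓ (ofLex x ∘ π) ∈ V := by
          refine Submodule.sum_mem _ fun π hπ => ?_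
          obtain ⟨hπA, hne⟩ := Finset.mem_filter.1 hπ
          have hle := toLex_le_rearrange _ A hA π hπA
          exact ih (toLex (ofLex x ∘ π)) (lt_of_le_of_ne hle fun h => hne h.symm)
        have hpos : (((permsOn A).filter
            fun π : Equiv.Perm (Fin n) => ofLex x ∘ π = ofLex x).card : ℂ) ≠ 0 := by
          rw [Nat.cast_ne_zero, ← Nat.pos_iff_ne_zero, Finset.card_pos]
          exact ⟨1, by simp [permsOn]⟩
        rw [h1] at hsum
        have h3 := V.smul_mem (((permsOn A).filter
          fun π : Equiv.Perm (Fin n) => ofLex x ∘ π = ofLex x).card : ℂ)⁻¹ (V.neg_mem h2)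
        rwa [← eq_neg_of_add_eq_zero_left hsum, smul_smul, inv_mul_cancel₀ hpos, one_smul] at h3
  exact main (toLex w)

lemma finrank_span_wordVec :
    Module.finrank ℂ (Submodule.span ℂ (Set.range (wordVec ℓ : (Fin n → Fin k) → _))) =
      Nat.card {w : Fin n → Fin k // wordLis k n w ≤ ℓ} := by
  classical
  have h : Submodule.span ℂ (Set.range (wordVec ℓ : (Fin n → Fin k) → _)) =
      Submodule.span ℂ (Set.range
      (fun w : {w : Fin n → Fin k // wordLis k n w ≤ ℓ} => wordVec ℓ (w : Fin n → Fin k))) := by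
    apply le_antisymm
    · rw [Submodule.span_le]
      rintro _ ⟨w, rfl⟩
      exact wordVec_mem_span w
    · refine Submodule.span_mono ?_
      rintro _ ⟨w, rfl⟩
      exact ⟨w, rfl⟩
  rw [h, finrank_span_eq_card linearIndependent_wordVec, Nat.card_eq_fintype_card]

end Words

/-! ### The unitary action and its invariants -/

section Action

open scoped Kronecker

variable {ℓ k n : ℕ}

/-- A word on pairs of letters as a pair of words. -/
def pairEquiv (n ℓ k : ℕ) :
    (Fin n → Fin ℓ) × (Fin n → Fin k) ≃ (Fin n → Fin ℓ × Fin k) :=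
  (Equiv.arrowProdEquivProdArrow (Fin n) (fun _ => Fin ℓ) (fun _ => Fin k)).symm

lemma pairEquiv_apply (a : Fin n → Fin ℓ) (w : Fin n → Fin k) :
    pairEquiv n ℓ k (a, w) = fun j => (a j, w j) := rfl

/-- The action of `M` on `Hom(V^{⊗n}, Λⁿ(V ⊗ ℂᵏ))`, composed with the projection onto that space
inside `Hom(V^{⊗n}, (V ⊗ ℂᵏ)^{⊗n})`. -/
def actMat (k n : ℕ) {ℓ : ℕ} (M : Matrix (Fin ℓ) (Fin ℓ) ℂ) :
    Matrix ((Fin n → Fin ℓ × Fin k) × (Fin n → Fin ℓ))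
      ((Fin n → Fin ℓ × Fin k) × (Fin n → Fin ℓ)) ℂ :=
  altPow n (M ⊗ₖ (1 : Matrix (Fin k) (Fin k) ℂ)) ⊗ₖ (tensorPow n M).map (starRingEnd ℂ)

lemma actMat_mul (M N : Matrix (Fin ℓ) (Fin ℓ) ℂ) :
    actMat k n M * actMat k n N = actMat k n (M * N) := by
  rw [actMat, actMat, actMat, ← Matrix.mul_kronecker_mul, altPow_mul, ← Matrix.mul_kronecker_mul,
    mul_one, tensorPow_mul, Matrix.map_mul]

lemma trace_actMat (M : Matrix (Fin ℓ) (Fin ℓ) ℂ) :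
    (actMat k n M).trace = (altPow n (M ⊗ₖ (1 : Matrix (Fin k) (Fin k) ℂ))).trace *
      (starRingEnd ℂ) M.trace ^ n := by
  rw [actMat, Matrix.trace_kronecker, ← map_pow, ← trace_tensorPow]
  congr 1
  simp [Matrix.trace]

lemma actMat_mulVec_apply (M : Matrix (Fin ℓ) (Fin ℓ) ℂ)
    (F : (Fin n → Fin ℓ × Fin k) × (Fin n → Fin ℓ) → ℂ) (u : Fin n → Fin ℓ × Fin k)
    (b : Fin n → Fin ℓ) :
    (actMat k n M *ᵥ F) (u, b) = (altPow n (M ⊗ₖ (1 : Matrix (Fin k) (Fin k) ℂ)) *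
      (Matrix.of fun u b => F (u, b)) * (tensorPow n M)ᴴ) u b := by
  simp only [Matrix.mulVec, dotProduct, Fintype.sum_prod_type, Matrix.mul_apply, actMat,
    Matrix.kroneckerMap_apply, Matrix.map_apply, Matrix.conjTranspose_apply, Matrix.of_apply,
    Finset.sum_mul, starRingEnd_apply]
  rw [Finset.sum_comm]
  refine Finset.sum_congr rfl fun _ _ => Finset.sum_congr rfl fun _ _ => ?_
  ring

/-- `wordVec w` is an equivariant map. -/
lemma actMat_mulVec_wordVec (M : Matrix (Fin ℓ) (Fin ℓ) ℂ)
    (hM : M ∈ Matrix.unitaryGroup (Fin ℓ) ℂ) (w : Fin n → Fin k) :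
    actMat k n M *ᵥ wordVec ℓ w = wordVec ℓ w := by
  have hn : (n.factorial : ℂ) ≠ 0 := by exact_mod_cast n.factorial_ne_zero
  ext ⟨u, b⟩
  rw [actMat_mulVec_apply]
  have h1 : altPow n (M ⊗ₖ (1 : Matrix (Fin k) (Fin k) ℂ)) *
      (Matrix.of fun u b => wordVec ℓ w (u, b)) =
      Matrix.of fun u b => ((M ⊗ₖ (1 : Matrix (Fin k) (Fin k) ℂ)).submatrix u
        (fun j => (b j, w j))).det := by
    ext u b
    have := congrFun (congrFun (altPow_mul (n := n) (M ⊗ₖ (1 : Matrix (Fin k) (Fin k) ℂ)) 1) u)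
      (fun j => (b j, w j))
    rw [mul_one, Matrix.mul_apply] at this
    rw [Matrix.mul_apply, Matrix.of_apply]
    have h2 : ∀ u', (Matrix.of fun u b => wordVec ℓ w (u, b)) u' b =
        (n.factorial : ℂ) * altPow n (1 : Matrix (Fin ℓ × Fin k) (Fin ℓ × Fin k) ℂ) u'
          (fun j => (b j, w j)) := by
      intro u'
      simp only [altPow, Matrix.of_apply, wordVec]
      rw [mul_inv_cancel_left₀ hn]
    simp only [h2, mul_left_comm _ (n.factorial : ℂ)]
    rw [← Finset.mul_sum, this, altPow, Matrix.of_apply, mul_inv_cancel_left₀ hn]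
  rw [h1, Matrix.mul_apply]
  have h3 := sum_det_mul_prod
    (fun (i : Fin n) (y : Fin ℓ) j => (M ⊗ₖ (1 : Matrix (Fin k) (Fin k) ℂ)) (u i) (y, w j))
    (fun j y => star (M (b j) y))
  have h4 : ∀ c : Fin n → Fin ℓ, (tensorPow n M)ᴴ c b = ∏ j, star (M (b j) (c j)) := by
    intro c; simp [tensorPow, Matrix.conjTranspose_apply]
  simp only [h4]
  refine h3.trans ?_
  rw [wordVec]
  congr 1
  ext i j
  have h5 : M * Mᴴ = 1 := Matrix.mem_unitaryGroup_iff.1 hM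
  have h6 := congrFun (congrFun h5 (u i).1) (b j)
  rw [Matrix.mul_apply] at h6
  simp only [Matrix.conjTranspose_apply] at h6
  have h7 : ∀ y, (M ⊗ₖ (1 : Matrix (Fin k) (Fin k) ℂ)) (u i) (y, w j) * star (M (b j) y) =
      (M (u i).1 y * star (M (b j) y)) * (1 : Matrix (Fin k) (Fin k) ℂ) (u i).2 (w j) := by
    intro y
    rw [Matrix.kroneckerMap_apply]; ring
  rw [Matrix.of_apply, Finset.sum_congr rfl fun y _ => h7 y, ← Finset.sum_mul, h6]
  rw [← Matrix.kroneckerMap_apply (fun x y : ℂ => x * y) (1 : Matrix (Fin ℓ) (Fin ℓ) ℂ)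
    (1 : Matrix (Fin k) (Fin k) ℂ) (u i) (b j, w j), Matrix.one_kronecker_one]
  rfl

/-- Every invariant is a combination of the equivariant maps attached to words. -/
lemma mem_span_of_invariant (F : (Fin n → Fin ℓ × Fin k) × (Fin n → Fin ℓ) → ℂ)
    (hF : ∀ M ∈ Matrix.unitaryGroup (Fin ℓ) ℂ, actMat k n M *ᵥ F = F) :
    F ∈ Submodule.span ℂ (Set.range (wordVec ℓ : (Fin n → Fin k) → _)) := by
  let G : Matrix (Fin n → Fin ℓ × Fin k) (Fin n → Fin ℓ) ℂ := Matrix.of fun u b => F (u, b)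
  have hG : ∀ M ∈ Matrix.unitaryGroup (Fin ℓ) ℂ,
      altPow n (M ⊗ₖ (1 : Matrix (Fin k) (Fin k) ℂ)) * G * (tensorPow n M)ᴴ = G := by
    intro M hM
    ext u b
    rw [← actMat_mulVec_apply, hF M hM]; rfl
  have hG1 : altPow n (1 : Matrix (Fin ℓ × Fin k) (Fin ℓ × Fin k) ℂ) * G = G := by
    have := hG 1 (one_mem _)
    rwa [tensorPow_one, Matrix.conjTranspose_one, Matrix.mul_one, Matrix.one_kronecker_one] at this
  have hcomm : ∀ M ∈ Matrix.unitaryGroup (Fin ℓ) ℂ,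
      tensorPow n (M ⊗ₖ (1 : Matrix (Fin k) (Fin k) ℂ)) * G = G * tensorPow n M := by
    intro M hM
    have h1 : (tensorPow n M)ᴴ * tensorPow n M = 1 := by
      rw [← tensorPow_conjTranspose, ← tensorPow_mul]
      have : Mᴴ * M = 1 := Matrix.mem_unitaryGroup_iff'.1 hM
      rw [this, tensorPow_one]
    have h2 : altPow n (M ⊗ₖ (1 : Matrix (Fin k) (Fin k) ℂ)) * G =
        tensorPow n (M ⊗ₖ (1 : Matrix (Fin k) (Fin k) ℂ)) * G := by
      conv_lhs => rw [← mul_one (M ⊗ₖ (1 : Matrix (Fin k) (Fin k) ℂ)), ← tensorPow_mul_altPow,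
        Matrix.mul_assoc, hG1]
    rw [← h2]
    conv_rhs => rw [← hG M hM, Matrix.mul_assoc, h1, Matrix.mul_one]
  -- the slice of `G` at a fixed second component commutes with the tensor powers
  let slice : (Fin n → Fin k) → Matrix (Fin n → Fin ℓ) (Fin n → Fin ℓ) ℂ := fun w =>
    Matrix.of fun a b => G (fun j => (a j, w j)) b
  have hslice : ∀ w, ∀ M ∈ Matrix.unitaryGroup (Fin ℓ) ℂ,
      slice w * tensorPow n M = tensorPow n M * slice w := by
    intro w M hM
    ext a b
    have h1 := congrFun (congrFun (hcomm M hM) (fun j => (a j, w j))) b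
    rw [Matrix.mul_apply, Matrix.mul_apply] at h1
    rw [Matrix.mul_apply, Matrix.mul_apply]
    simp only [slice, Matrix.of_apply]
    rw [← h1, ← (pairEquiv n ℓ k).sum_comp,
      Fintype.sum_prod_type]
    refine Finset.sum_congr rfl fun c _ => ?_
    rw [Finset.sum_eq_single w]
    · simp [tensorPow, pairEquiv_apply]
    · intro v _ hv
      have : tensorPow n (M ⊗ₖ (1 : Matrix (Fin k) (Fin k) ℂ)) (fun j => (a j, w j))
          (pairEquiv n ℓ k
            (c, v)) = 0 := by
        obtain ⟨j, hj⟩ := Function.ne_iff.1 hv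
        simp only [tensorPow, Matrix.of_apply]
        refine Finset.prod_eq_zero (Finset.mem_univ j) ?_
        simp [pairEquiv_apply, Ne.symm hj]
      rw [this, zero_mul]
    · intro h; exact absurd (Finset.mem_univ _) h
  choose c hc using fun w => exists_perm_combination (slice w) (hslice w)
  have hfinal : F = ∑ w, ∑ σ : Equiv.Perm (Fin n),
      (c w σ * ((n.factorial : ℂ)⁻¹ * ((Equiv.Perm.sign σ : ℤ) : ℂ))) • wordVec ℓ (w ∘ σ) := by
    ext ⟨u, b⟩
    have h1 := congrFun (congrFun hG1 u) b
    rw [Matrix.mul_apply, ← (pairEquiv n ℓ k).sum_comp,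
      Fintype.sum_prod_type, Finset.sum_comm] at h1
    simp only [Finset.sum_apply, Pi.smul_apply, smul_eq_mul]
    refine Eq.trans h1.symm ?_
    refine Finset.sum_congr rfl fun w _ => ?_
    have h2 : ∀ a, G (pairEquiv n ℓ k (a, w)) b = ∑ σ, c w σ * permMat ℓ σ a b := by
      intro a
      have := congrFun (congrFun (hc w) a) b
      rw [Matrix.sum_apply] at this
      exact this
    simp only [h2, Finset.mul_sum]
    rw [Finset.sum_comm]
    refine Finset.sum_congr rfl fun σ _ => ?_
    rw [Finset.sum_eq_single (b ∘ σ.symm)]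
    · have h3 : permMat ℓ σ (b ∘ σ.symm) b = 1 := by
        simp [permMat, Function.comp_assoc]
      have h4 : (1 : Matrix (Fin ℓ × Fin k) (Fin ℓ × Fin k) ℂ).submatrix u
          (fun j => (b j, (w ∘ σ) j)) =
          ((1 : Matrix (Fin ℓ × Fin k) (Fin ℓ × Fin k) ℂ).submatrix u
            (pairEquiv n ℓ k (b ∘ σ.symm, w))).submatrix id σ := by
        ext i j
        simp only [Matrix.submatrix_apply, pairEquiv_apply, Function.comp, id]
        rw [Equiv.symm_apply_apply]
      have h5 : ((Equiv.Perm.sign σ : ℤ) : ℂ) * ((Equiv.Perm.sign σ : ℤ) : ℂ) = 1 := by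
        norm_cast; simp
      rw [h3, wordVec]
      simp only
      rw [h4, Matrix.det_permute']
      simp only [altPow, Matrix.of_apply]
      linear_combination (-c w σ * (n.factorial : ℂ)⁻¹ *
        ((1 : Matrix (Fin ℓ × Fin k) (Fin ℓ × Fin k) ℂ).submatrix u
            (pairEquiv n ℓ k (b ∘ σ.symm, w))).det) * h5
    · intro a _ ha
      have : permMat ℓ σ a b = 0 := by
        simp only [permMat, Matrix.of_apply, ite_eq_right_iff]
        intro h
        exact absurd (by rw [← h, Function.comp_assoc]; simp) ha
      rw [this]; ring
    · intro h; exact absurd (Finset.mem_univ _) h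
  rw [hfinal]
  exact Submodule.sum_mem _ fun w _ => Submodule.sum_mem _ fun σ _ =>
    Submodule.smul_mem _ _ (Submodule.subset_span ⟨w ∘ σ, rfl⟩)

end Action

/-! ### Haar averages -/

section Integration

open scoped Kronecker

variable {ℓ k n : ℕ}

instance : BorelSpace (Matrix.unitaryGroup (Fin ℓ) ℂ) := ⟨rfl⟩

instance : CompactSpace (Matrix.unitaryGroup (Fin ℓ) ℂ) := by
  have hK : IsCompact (Set.pi Set.univ fun _ : Fin ℓ =>
      Set.pi Set.univ fun _ : Fin ℓ => Metric.closedBall (0 : ℂ) 1) :=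
    isCompact_univ_pi fun _ => isCompact_univ_pi fun _ => isCompact_closedBall _ _
  have hC : IsClosed ((Matrix.unitaryGroup (Fin ℓ) ℂ : Submonoid _) :
      Set (Matrix (Fin ℓ) (Fin ℓ) ℂ)) := isClosed_unitary
  refine isCompact_iff_compactSpace.mp (hK.of_isClosed_subset hC fun U hU => ?_)
  intro i _ j _
  simpa using entry_norm_bound_of_unitary hU i j

lemma integrable_of_continuous_unitary (μ : Measure (Matrix.unitaryGroup (Fin ℓ) ℂ))
    [IsProbabilityMeasure μ] {f : Matrix.unitaryGroup (Fin ℓ) ℂ → ℂ} (hf : Continuous f) :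
    Integrable f μ :=
  hf.integrable_of_hasCompactSupport (HasCompactSupport.of_compactSpace f)

lemma continuous_altPow_kronecker (a b : Fin n → Fin ℓ × Fin k) :
    Continuous fun M : Matrix.unitaryGroup (Fin ℓ) ℂ =>
      altPow n ((M : Matrix (Fin ℓ) (Fin ℓ) ℂ) ⊗ₖ (1 : Matrix (Fin k) (Fin k) ℂ)) a b := by
  simp only [altPow, Matrix.of_apply]
  refine continuous_const.mul (Continuous.matrix_det ?_)
  refine continuous_matrix fun i j => ?_
  simp only [Matrix.submatrix_apply, Matrix.kroneckerMap_apply]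
  exact (continuous_subtype_val.matrix_elem _ _).mul continuous_const

lemma continuous_actMat (x y : (Fin n → Fin ℓ × Fin k) × (Fin n → Fin ℓ)) :
    Continuous fun M : Matrix.unitaryGroup (Fin ℓ) ℂ =>
      actMat k n (M : Matrix (Fin ℓ) (Fin ℓ) ℂ) x y := by
  simp only [actMat, Matrix.kroneckerMap_apply, Matrix.map_apply, tensorPow, Matrix.of_apply]
  refine (continuous_altPow_kronecker _ _).mul (Complex.continuous_conj.comp ?_)
  exact continuous_finsetProd _ fun i _ => continuous_subtype_val.matrix_elem _ _

/-- The Haar average of the action. -/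
def haarProj (k n : ℕ) {ℓ : ℕ} (μ : Measure (Matrix.unitaryGroup (Fin ℓ) ℂ)) :
    Matrix ((Fin n → Fin ℓ × Fin k) × (Fin n → Fin ℓ))
      ((Fin n → Fin ℓ × Fin k) × (Fin n → Fin ℓ)) ℂ :=
  Matrix.of fun x y => ∫ M : Matrix.unitaryGroup (Fin ℓ) ℂ,
    actMat k n (M : Matrix (Fin ℓ) (Fin ℓ) ℂ) x y ∂μ

variable (μ : Measure (Matrix.unitaryGroup (Fin ℓ) ℂ)) [IsProbabilityMeasure μ]

lemma haarProj_mulVec (F : (Fin n → Fin ℓ × Fin k) × (Fin n → Fin ℓ) → ℂ)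
    (x : (Fin n → Fin ℓ × Fin k) × (Fin n → Fin ℓ)) :
    (haarProj k n μ *ᵥ F) x = ∫ M : Matrix.unitaryGroup (Fin ℓ) ℂ,
      (actMat k n (M : Matrix (Fin ℓ) (Fin ℓ) ℂ) *ᵥ F) x ∂μ := by
  simp only [Matrix.mulVec, dotProduct, haarProj, Matrix.of_apply]
  rw [integral_finsetSum]
  · simp only [integral_mul_const]
  · exact fun y _ => (integrable_of_continuous_unitary μ (continuous_actMat x y)).mul_const _

lemma trace_haarProj :
    (haarProj k n μ).trace = ∫ M : Matrix.unitaryGroup (Fin ℓ) ℂ,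
      (actMat k n (M : Matrix (Fin ℓ) (Fin ℓ) ℂ)).trace ∂μ := by
  simp only [Matrix.trace, Matrix.diag, haarProj, Matrix.of_apply]
  rw [integral_finsetSum]
  exact fun y _ => integrable_of_continuous_unitary μ (continuous_actMat y y)

lemma actMat_mul_haarProj [μ.IsMulLeftInvariant] (N : Matrix.unitaryGroup (Fin ℓ) ℂ) :
    actMat k n (N : Matrix (Fin ℓ) (Fin ℓ) ℂ) * haarProj k n μ = haarProj k n μ := by
  ext x y
  have h := integral_mul_left_eq_self (μ := μ)
    (fun M : Matrix.unitaryGroup (Fin ℓ) ℂ => actMat k n (M : Matrix (Fin ℓ) (Fin ℓ) ℂ) x y) N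
  simp only [haarProj, Matrix.of_apply, Matrix.mul_apply]
  rw [← h]
  simp only [Submonoid.coe_mul, ← actMat_mul, Matrix.mul_apply]
  rw [integral_finsetSum]
  · simp only [integral_const_mul]
  · exact fun z _ => (integrable_of_continuous_unitary μ (continuous_actMat z y)).const_mul _

/-- The Haar average projects onto the invariants, which are spanned by the vectors `wordVec`. -/
lemma isProj_haarProj [μ.IsMulLeftInvariant] :
    LinearMap.IsProj (Submodule.span ℂ (Set.range (wordVec ℓ : (Fin n → Fin k) → _)))
      (haarProj k n μ).mulVecLin where
  map_mem F := by
    refine mem_span_of_invariant _ fun M hM => ?_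
    rw [Matrix.mulVecLin_apply, Matrix.mulVec_mulVec]
    exact congrArg (· *ᵥ F) (actMat_mul_haarProj μ ⟨M, hM⟩)
  map_id F hF := by
    induction hF using Submodule.span_induction with
    | mem F hF =>
      obtain ⟨w, rfl⟩ := hF
      ext x
      rw [Matrix.mulVecLin_apply, haarProj_mulVec]
      simp [actMat_mulVec_wordVec _ (Subtype.property _) w]
    | zero => simp
    | add F G _ _ hF hG => rw [map_add, hF, hG]
    | smul c F _ hF => rw [map_smul, hF]

lemma trace_eq_finrank_of_isProj {ι : Type*} [Fintype ι] [DecidableEq ι]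
    {p : Submodule ℂ (ι → ℂ)} {A : Matrix ι ι ℂ} (h : LinearMap.IsProj p A.mulVecLin) :
    A.trace = Module.finrank ℂ p := by
  rw [← h.trace, ← Matrix.toLin'_apply', Matrix.trace_toLin'_eq]

/-- The multiplicity of the trivial representation in `Hom(V^{⊗n}, Λⁿ(V ⊗ ℂᵏ))`. -/
lemma integral_trace_altPow [μ.IsMulLeftInvariant] :
    ∫ M : Matrix.unitaryGroup (Fin ℓ) ℂ,
      (altPow n ((M : Matrix (Fin ℓ) (Fin ℓ) ℂ) ⊗ₖ (1 : Matrix (Fin k) (Fin k) ℂ))).trace *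
        (starRingEnd ℂ) (M : Matrix (Fin ℓ) (Fin ℓ) ℂ).trace ^ n ∂μ =
      (Nat.card {w : Fin n → Fin k // wordLis k n w ≤ ℓ} : ℂ) := by
  rw [← finrank_span_wordVec, ← trace_eq_finrank_of_isProj (isProj_haarProj μ), trace_haarProj]
  simp only [trace_actMat]

lemma altPow_smul {X : Type*} (m : ℕ) (z : ℂ) (N : Matrix X X ℂ) :
    altPow m (z • N) = z ^ m • altPow m N := by
  ext a b
  simp only [altPow, Matrix.of_apply, Matrix.smul_apply, Matrix.submatrix_smul, Pi.smul_apply,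
    Matrix.det_smul, Fintype.card_fin, smul_eq_mul]
  ring

/-- Invariance under scalar matrices kills the terms of unequal degrees in `M` and `conj M`. -/
lemma integral_trace_altPow_of_ne [μ.IsMulLeftInvariant] {m : ℕ} (hmn : m ≠ n) :
    ∫ M : Matrix.unitaryGroup (Fin ℓ) ℂ,
      (altPow m ((M : Matrix (Fin ℓ) (Fin ℓ) ℂ) ⊗ₖ (1 : Matrix (Fin k) (Fin k) ℂ))).trace *
        (starRingEnd ℂ) (M : Matrix (Fin ℓ) (Fin ℓ) ℂ).trace ^ n ∂μ = 0 := by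
  -- a unimodular `z` with `z ^ m * conj z ^ n = -1`
  obtain ⟨z, hz, hzn⟩ : ∃ z : ℂ, z * (starRingEnd ℂ) z = 1 ∧
      z ^ m * (starRingEnd ℂ) z ^ n = -1 := by
    have hd : ((m : ℂ) - n) ≠ 0 := sub_ne_zero.mpr (by exact_mod_cast hmn)
    refine ⟨Complex.exp ((Real.pi / ((m : ℝ) - n) : ℝ) * Complex.I), ?_, ?_⟩
    · rw [← Complex.exp_conj, ← Complex.exp_add]
      simp
    · rw [← Complex.exp_conj, ← Complex.exp_nat_mul, ← Complex.exp_nat_mul, ← Complex.exp_add,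
        ← Complex.exp_pi_mul_I]
      congr 1
      simp only [map_mul, Complex.conj_ofReal, Complex.conj_I]
      push_cast
      field_simp
      ring
  have hU : z • (1 : Matrix (Fin ℓ) (Fin ℓ) ℂ) ∈ Matrix.unitaryGroup (Fin ℓ) ℂ := by
    rw [Matrix.mem_unitaryGroup_iff, star_smul, star_one, smul_mul_smul_comm, mul_one]
    rw [show z * star z = 1 from hz, one_smul]
  have h := integral_mul_left_eq_self (μ := μ)
    (fun M : Matrix.unitaryGroup (Fin ℓ) ℂ =>
      (altPow m ((M : Matrix (Fin ℓ) (Fin ℓ) ℂ) ⊗ₖ (1 : Matrix (Fin k) (Fin k) ℂ))).trace *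
        (starRingEnd ℂ) (M : Matrix (Fin ℓ) (Fin ℓ) ℂ).trace ^ n) ⟨_, hU⟩
  simp only [Submonoid.coe_mul, smul_mul_assoc, one_mul, Matrix.smul_kronecker, altPow_smul,
    Matrix.trace_smul, smul_eq_mul, map_mul, mul_pow] at h
  have h2 : ∀ a b : ℂ, z ^ m * a * ((starRingEnd ℂ) z ^ n * b) = -1 * (a * b) := fun a b => by
    rw [← hzn]; ring
  simp only [h2, integral_const_mul] at h
  linear_combination (-1 / 2 : ℂ) * h

/-- `det (1 + M)^k` is the character of the exterior algebra of `V ⊗ ℂᵏ`. -/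
lemma det_one_add_pow (M : Matrix (Fin ℓ) (Fin ℓ) ℂ) {d : ℕ} (hd : ℓ * k < d) :
    (1 + M).det ^ k = ∑ m ∈ Finset.range d,
      (altPow m (M ⊗ₖ (1 : Matrix (Fin k) (Fin k) ℂ))).trace := by
  set N := M ⊗ₖ (1 : Matrix (Fin k) (Fin k) ℂ) with hN
  have h1 : (1 + M).det ^ k = (1 + N).det := by
    have : 1 + N = (1 + M) ⊗ₖ (1 : Matrix (Fin k) (Fin k) ℂ) := by
      rw [Matrix.add_kronecker, Matrix.one_kronecker_one]
    rw [this, Matrix.det_kronecker]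
    simp
  have h2 : (1 + N).det =
      (det (1 + (Polynomial.X : Polynomial ℂ) • N.map Polynomial.C)).eval 1 := by
    rw [← Polynomial.coe_evalRingHom, RingHom.map_det]
    congr 1
    ext i j
    by_cases hij : i = j <;> simp [hij]
  have h3 : (det (1 + (Polynomial.X : Polynomial ℂ) • N.map Polynomial.C)).natDegree < d := by
    refine lt_of_le_of_lt ?_ hd
    have := Polynomial.natDegree_det_X_add_C_le N 1
    rw [Matrix.map_one _ (map_zero _) (map_one _), add_comm] at this
    simpa using this
  rw [h1, h2, Polynomial.eval_eq_sum_range' h3]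
  simp only [one_pow, mul_one, trace_altPow]

lemma continuous_trace_altPow_mul (m : ℕ) :
    Continuous fun M : Matrix.unitaryGroup (Fin ℓ) ℂ =>
      (altPow m ((M : Matrix (Fin ℓ) (Fin ℓ) ℂ) ⊗ₖ (1 : Matrix (Fin k) (Fin k) ℂ))).trace *
        (starRingEnd ℂ) (M : Matrix (Fin ℓ) (Fin ℓ) ℂ).trace ^ n := by
  refine Continuous.mul ?_ ((Complex.continuous_conj.comp
    continuous_subtype_val.matrix_trace).pow n)
  exact continuous_finsetSum _ fun a _ => continuous_altPow_kronecker a a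

lemma integral_det_mul_pow [μ.IsMulLeftInvariant] (k n : ℕ) :
    ∫ M : Matrix.unitaryGroup (Fin ℓ) ℂ,
      ((1 : Matrix (Fin ℓ) (Fin ℓ) ℂ) + (M : Matrix (Fin ℓ) (Fin ℓ) ℂ)).det ^ k *
        (starRingEnd ℂ) (M : Matrix (Fin ℓ) (Fin ℓ) ℂ).trace ^ n ∂μ =
      (Nat.card {w : Fin n → Fin k // wordLis k n w ≤ ℓ} : ℂ) := by
  have hd : ℓ * k < ℓ * k + n + 1 := by omega
  simp only [det_one_add_pow _ hd, Finset.sum_mul]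
  rw [integral_finsetSum _ fun m _ => integrable_of_continuous_unitary μ
    (continuous_trace_altPow_mul m), Finset.sum_eq_single n, integral_trace_altPow]
  · exact fun m _ hm => integral_trace_altPow_of_ne μ hm
  · intro h
    simp only [Finset.mem_range] at h
    omega

/-- Term by term integration of the exponential series. -/
lemma hasSum_integral_mul_exp {D T : Matrix.unitaryGroup (Fin ℓ) ℂ → ℂ} (hD : Continuous D)
    (hT : Continuous T) (x : ℂ) :
    HasSum (fun n : ℕ => x ^ n / (n.factorial : ℂ) * ∫ M, D M * T M ^ n ∂μ)
      (∫ M, D M * Complex.exp (x * T M) ∂μ) := by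
  obtain ⟨C, hC⟩ := isCompact_univ.exists_bound_of_continuousOn hD.continuousOn
  obtain ⟨B, hB⟩ := isCompact_univ.exists_bound_of_continuousOn hT.continuousOn
  have hsum : Summable fun n : ℕ => C * ((‖x‖ * B) ^ n / (n.factorial : ℝ)) :=
    (Real.summable_pow_div_factorial _).mul_left C
  have key := hasSum_integral_of_dominated_convergence (μ := μ)
    (F := fun (n : ℕ) M => D M * ((x * T M) ^ n / (n.factorial : ℂ)))
    (f := fun M => D M * Complex.exp (x * T M))
    (fun n _ => C * ((‖x‖ * B) ^ n / (n.factorial : ℝ)))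
    (fun n => (hD.mul (((continuous_const.mul hT).pow n).div_const _)).aestronglyMeasurable)
    (fun n => .of_forall fun M => by
      rw [norm_mul, norm_div, norm_pow, norm_mul, Complex.norm_natCast]
      have := hC M trivial
      have := hB M trivial
      have : 0 ≤ C := (norm_nonneg _).trans (hC M trivial)
      gcongr)
    (.of_forall fun _ => hsum) (integrable_const (μ := μ) (∑' n : ℕ, _))
    (.of_forall fun M => by
      rw [Complex.exp_eq_exp_ℂ]
      exact (NormedSpace.expSeries_div_hasSum_exp (x * T M)).mul_left (D M))
  have hterm : (fun n : ℕ => x ^ n / (n.factorial : ℂ) * ∫ M, D M * T M ^ n ∂μ) =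
      fun n : ℕ => ∫ M, D M * ((x * T M) ^ n / (n.factorial : ℂ)) ∂μ := by
    funext n
    rw [← integral_const_mul]
    refine integral_congr_ae (.of_forall fun M => ?_)
    simp only [mul_pow]
    ring
  rw [hterm]
  exact key

end Integration

theorem tracy_widom_words_identity (ℓ k : ℕ) (hℓ : 1 ≤ ℓ) (hk : 1 ≤ k) (x : ℝ)
    (μ : Measure (Matrix.unitaryGroup (Fin ℓ) ℂ)) [IsProbabilityMeasure μ]
    [μ.IsMulLeftInvariant] :
    HasSum
      (fun n : ℕ =>
        ((x ^ n / (Nat.factorial n : ℝ) *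
          (Nat.card {w : Fin n → Fin k // wordLis k n w ≤ ℓ} : ℝ) : ℝ) : ℂ))
      (∫ M : Matrix.unitaryGroup (Fin ℓ) ℂ,
        ((1 : Matrix (Fin ℓ) (Fin ℓ) ℂ) + (M : Matrix (Fin ℓ) (Fin ℓ) ℂ)).det ^ k *
          Complex.exp ((x : ℂ) * (starRingEnd ℂ)
            (Matrix.trace (M : Matrix (Fin ℓ) (Fin ℓ) ℂ))) ∂μ) := by
  have h := hasSum_integral_mul_exp μ
    (D := fun M => ((1 : Matrix (Fin ℓ) (Fin ℓ) ℂ) + (M : Matrix (Fin ℓ) (Fin ℓ) ℂ)).det ^ k)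
    (T := fun M => (starRingEnd ℂ) (Matrix.trace (M : Matrix (Fin ℓ) (Fin ℓ) ℂ)))
    ((Continuous.matrix_det (continuous_const.add continuous_subtype_val)).pow k)
    (Complex.continuous_conj.comp continuous_subtype_val.matrix_trace) (x : ℂ)
  simp only [integral_det_mul_pow] at h
  convert h using 2 with n
  push_cast
  rfl
end
end
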